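/- arXiv:1009.5092 — 13 statements merged into one kernel-verified Lean document; each statement's English description precedes it below -/
import Mathlib

section
/- Let G : ℤ → ℚ satisfy G_{n+2} = A·G_{n+1} + B·G_n for all n ∈ ℤ with B ≠ 0, and let G' : ℤ → ℚ satisfy G'_{n+2} = A'·G'_{n+1} + B'·G'_n for all n ∈ ℤ with B' ≠ 0. Assume G_1² ≠ A·G_1·G_0 + B·G_0² and G'_1² ≠ A'·G'_1·G'_0 + B'·G'_0² (i.e. neither sequence is of the form n ↦ g·μⁿ). Then there exists k ∈ ℤ with G'_n = G_{n+k} for all n ∈ ℤ if and only if G and G' share four equal consecutive terms, i.e. there exist r, s ∈ ℤ with G'_{r+i} = G_{s+i} for i = 0, 1, 2, 3. -/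
/-- Two extended binary recurrence sequences (with possibly different parameters),
neither of which is geometric, are shift-equivalent if and only if they share four
equal consecutive terms. -/
theorem shift_equivalent_iff_four_consecutive_terms
    (A B A' B' : ℚ) (hB : B ≠ 0) (hB' : B' ≠ 0) (G G' : ℤ → ℚ)
    (hG : ∀ n : ℤ, G (n + 2) = A * G (n + 1) + B * G n)
    (hG' : ∀ n : ℤ, G' (n + 2) = A' * G' (n + 1) + B' * G' n)
    (hgeo : (G 1) ^ 2 ≠ A * G 1 * G 0 + B * (G 0) ^ 2)
    (hgeo' : (G' 1) ^ 2 ≠ A' * G' 1 * G' 0 + B' * (G' 0) ^ 2) :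
    (∃ k : ℤ, ∀ n : ℤ, G' n = G (n + k)) ↔
      (∃ r s : ℤ, G' r = G s ∧ G' (r + 1) = G (s + 1) ∧
        G' (r + 2) = G (s + 2) ∧ G' (r + 3) = G (s + 3)) := by
  constructor
  · rintro ⟨k, hk⟩
    refine ⟨0, k, ?_, ?_, ?_, ?_⟩ <;> rw [hk] <;> congr 1 <;> ring
  · rintro ⟨r, s, h0, h1, h2, h3⟩
    have hstep : ∀ n : ℤ, (G (n + 1 + 1)) ^ 2 - A * G (n + 1 + 1) * G (n + 1) - B * (G (n + 1)) ^ 2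
        = -B * ((G (n + 1)) ^ 2 - A * G (n + 1) * G n - B * (G n) ^ 2) := by
      intro n
      have e : n + 1 + 1 = n + 2 := by ring
      rw [e, hG n]
      ring
    have hD : ∀ n : ℤ, (G (n + 1)) ^ 2 - A * G (n + 1) * G n - B * (G n) ^ 2 ≠ 0 := by
      intro n
      induction n using Int.induction_on with
      | zero =>
        intro h
        apply hgeo
        simp only [zero_add] at h
        linarith
      | succ i ih =>
        rw [hstep]
        exact mul_ne_zero (neg_ne_zero.mpr hB) ih
      | pred i ih =>
        intro h
        apply ih
        have := hstep (-(i : ℤ) - 1)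
        rw [h, mul_zero] at this
        simpa only [sub_add_cancel] using this
    have hd := hD s
    have e3 : ∀ n : ℤ, n + 3 = n + 1 + 2 := fun n => by ring
    have e2 : ∀ n : ℤ, n + 1 + 1 = n + 2 := fun n => by ring
    have g2 := hG s
    have g3 := hG (s + 1)
    have g2' := hG' r
    have g3' := hG' (r + 1)
    rw [← e3, e2] at g3 g3'
    rw [h0, h1, h2] at g2'
    rw [h1, h2, h3] at g3'
    have hA : A = A' := by
      have : (A - A') * ((G (s + 1)) ^ 2 - A * G (s + 1) * G s - B * (G s) ^ 2) = 0 := by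
        have p : (A - A') * G (s + 1) + (B - B') * G s = 0 := by linarith
        have q : (A - A') * G (s + 2) + (B - B') * G (s + 1) = 0 := by linarith
        linear_combination G (s + 1) * p - G s * q + (A - A') * G s * g2
      exact sub_eq_zero.mp ((mul_eq_zero.mp this).resolve_right hd)
    have hBB : B = B' := by
      have : (B - B') * ((G (s + 1)) ^ 2 - A * G (s + 1) * G s - B * (G s) ^ 2) = 0 := by
        have p : (A - A') * G (s + 1) + (B - B') * G s = 0 := by linarith
        have q : (A - A') * G (s + 2) + (B - B') * G (s + 1) = 0 := by linarith
        linear_combination G (s + 1) * q - G (s + 2) * p + (B - B') * G s * g2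
      exact sub_eq_zero.mp ((mul_eq_zero.mp this).resolve_right hd)
    subst hA hBB
    have key : ∀ m : ℤ, G' (r + m) = G (s + m) ∧ G' (r + m + 1) = G (s + m + 1) := by
      intro m
      induction m using Int.induction_on with
      | zero => simpa using ⟨h0, h1⟩
      | succ i ih =>
        rw [← add_assoc, ← add_assoc]
        refine ⟨ih.2, ?_⟩
        rw [e2, e2, hG, hG', ih.1, ih.2]
      | pred i ih =>
        have f : ∀ n : ℤ, n + (-(i : ℤ) - 1) + 1 = n + -(i : ℤ) := fun n => by ring
        have f2 : ∀ n : ℤ, n + (-(i : ℤ) - 1) + 2 = n + -(i : ℤ) + 1 := fun n => by ring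
        refine ⟨?_, by rw [f, f]; exact ih.1⟩
        have a := hG (s + (-(i : ℤ) - 1))
        have b := hG' (r + (-(i : ℤ) - 1))
        rw [f, f2] at a b
        rw [ih.1, ih.2] at b
        apply mul_left_cancel₀ hB
        linarith
    refine ⟨s - r, fun n => ?_⟩
    have := (key (n - r)).1
    rw [show r + (n - r) = n by ring, show s + (n - r) = n + (s - r) by ring] at this
    exact this
end

section
/- Let A, B be rational numbers with B ≠ 0, and let G : ℤ → ℚ satisfy G_{n+2} = A·G_{n+1} + B·G_n for all n ∈ ℤ. Then G_1² = A·G_1·G_0 + B·G_0² if and only if there exist g, μ ∈ ℚ with μ ≠ 0 such that G_n = g·μⁿ for all n ∈ ℤ. -/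
theorem geometric_aux
    (A B : ℚ) (hB : B ≠ 0) (G : ℤ → ℚ)
    (hG : ∀ n : ℤ, G (n + 2) = A * G (n + 1) + B * G n) (g m : ℚ) (hm : m ≠ 0)
    (h0 : G 0 = g) (h1 : G 1 = g * m) (e : g * m ^ 2 = g * (A * m + B)) (n : ℤ) :
    G n = g * m ^ n ∧ G (n + 1) = g * m ^ (n + 1) := by
  induction n using Int.induction_on with
  | zero => simp [h0, h1]
  | succ k ih =>
    refine ⟨ih.2, ?_⟩
    have h := hG k
    rw [ih.1, ih.2] at h
    rw [show (k : ℤ) + 1 + 1 = k + 2 by ring, h, zpow_add₀ hm, zpow_add₀ hm, zpow_one,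
      show m ^ (2 : ℤ) = m ^ 2 from by norm_cast]
    linear_combination (-(m ^ (k : ℤ))) * e
  | pred k ih =>
    have h := hG (-(k : ℤ) - 1)
    rw [show -(k : ℤ) - 1 + 2 = -k + 1 by ring, show -(k : ℤ) - 1 + 1 = -k by ring,
      ih.1, ih.2] at h
    rw [show -(k : ℤ) - 1 + 1 = -k by ring]
    refine ⟨?_, ih.1⟩
    apply mul_left_cancel₀ hB
    have p : m ^ (-(k : ℤ)) = m ^ (-(k : ℤ) - 1) * m := by
      rw [← zpow_add_one₀ hm]; congr 1; ring
    rw [zpow_add_one₀ hm, p] at h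
    linear_combination (m ^ (-(k : ℤ) - 1)) * e - h

/-- An extended binary recurrence sequence `G` with parameters `A`, `B` (`B ≠ 0`) is
geometric, i.e. of the form `n ↦ g·μⁿ` with `μ ≠ 0`, if and only if
`G₁² = A·G₁·G₀ + B·G₀²`. -/
theorem geometric_iff
    (A B : ℚ) (hB : B ≠ 0) (G : ℤ → ℚ)
    (hG : ∀ n : ℤ, G (n + 2) = A * G (n + 1) + B * G n) :
    (G 1) ^ 2 = A * G 1 * G 0 + B * (G 0) ^ 2 ↔
      ∃ g μ : ℚ, μ ≠ 0 ∧ ∀ n : ℤ, G n = g * μ ^ n := by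
  constructor
  · intro h
    by_cases h0 : G 0 = 0
    · have h1 : G 1 = 0 := by simpa [h0] using h
      exact ⟨0, 1, one_ne_zero, fun n =>
        (geometric_aux A B hB G hG 0 1 one_ne_zero h0 (by simp [h1]) (by simp) n).1⟩
    · have h1 : G 1 ≠ 0 := by
        intro h1
        simp [h1, h0, hB] at h
      refine ⟨G 0, G 1 / G 0, div_ne_zero h1 h0, fun n =>
        (geometric_aux A B hB G hG _ _ (div_ne_zero h1 h0) rfl (by field_simp) ?_ n).1⟩
      field_simp
      linear_combination h
  · rintro ⟨g, m, hm, h⟩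
    have h2 := hG 0
    have e2 : G 2 = g * m ^ 2 := by rw [h 2]; norm_cast
    have e1 : G 1 = g * m := by simp [h 1]
    have e0 : G 0 = g := by simp [h 0]
    norm_num at h2
    rw [e2, e1, e0] at h2
    rw [e1, e0]
    linear_combination g * h2
end

section
/- Let ℓ be an odd prime and let A, B, u, v be integers with ℓ not dividing B, and let G be the binary recurrence sequence with these data. Let Δ = A² + 4B be the discriminant. If ℓ does not divide Δ and Δ is a nonzero square modulo ℓ (i.e. there is an integer c with c² ≡ Δ (mod ℓ)), then the least positive integer k such that G_{n+k} ≡ G_n (mod ℓ) for all n ≥ 0 divides ℓ - 1. -/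
/-- If an odd prime `ℓ` divides neither `B` nor the discriminant `Δ = A² + 4B`, and `Δ`
is a (nonzero) square modulo `ℓ`, then the minimal period of the binary recurrence
sequence modulo `ℓ` divides `ℓ - 1`. -/
theorem period_dvd_of_discriminant_square
    (ℓ : ℕ) (hℓ : Nat.Prime ℓ) (hodd : Odd ℓ) (A B u v : ℤ) (hB : ¬ (ℓ : ℤ) ∣ B)
    (G : ℕ → ℤ) (hG0 : G 0 = u) (hG1 : G 1 = v)
    (hGrec : ∀ n : ℕ, G (n + 2) = A * G (n + 1) + B * G n)
    (hΔ : ¬ (ℓ : ℤ) ∣ (A ^ 2 + 4 * B))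
    (hsq : ∃ c : ℤ, c ^ 2 ≡ A ^ 2 + 4 * B [ZMOD (ℓ : ℤ)])
    (π : ℕ)
    (hπ : IsLeast {k : ℕ | 0 < k ∧ ∀ n : ℕ, G (n + k) ≡ G n [ZMOD (ℓ : ℤ)]} π) :
    π ∣ ℓ - 1 := by
  have : Fact ℓ.Prime := ⟨hℓ⟩
  obtain ⟨⟨hpos, hper⟩, hmin⟩ := hπ
  obtain ⟨c, hc⟩ := hsq
  have h2 : (2 : ZMod ℓ) ≠ 0 := by
    intro h
    have h' : ((2 : ℕ) : ZMod ℓ) = 0 := by exact_mod_cast h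
    rw [ZMod.natCast_eq_zero_iff] at h'
    have := (Nat.prime_dvd_prime_iff_eq hℓ Nat.prime_two).1 h'
    subst this
    exact absurd hodd (by decide)
  have hc' : (c : ZMod ℓ) ^ 2 = (A : ZMod ℓ) ^ 2 + 4 * (B : ZMod ℓ) := by
    have := (ZMod.intCast_eq_intCast_iff _ _ ℓ).2 hc
    push_cast at this
    exact this
  have hB' : (B : ZMod ℓ) ≠ 0 := fun h => hB ((ZMod.intCast_zmod_eq_zero_iff_dvd B ℓ).1 h)
  have hD' : (c : ZMod ℓ) ≠ 0 := by
    intro h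
    apply hΔ
    rw [← ZMod.intCast_zmod_eq_zero_iff_dvd]
    push_cast
    rw [← hc', h]
    ring
  have hrec : ∀ n, (G (n + 2) : ZMod ℓ) = A * G (n + 1) + B * G n := by
    intro n
    rw [hGrec]
    push_cast
    ring
  obtain ⟨a, ha⟩ : ∃ a : ZMod ℓ, 2 * a = A + c := ⟨(A + c) / 2, by field_simp⟩
  obtain ⟨b, hb⟩ : ∃ b : ZMod ℓ, 2 * b = A - c := ⟨(A - c) / 2, by field_simp⟩
  have hsum : a + b = A := mul_left_cancel₀ h2 (by linear_combination ha + hb)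
  have hdiff : a - b = c := mul_left_cancel₀ h2 (by linear_combination ha - hb)
  have hprod : a * b = -B := by
    apply mul_left_cancel₀ h2
    apply mul_left_cancel₀ h2
    linear_combination 2 * b * ha + (A + c) * hb - hc'
  have ha0 : a ≠ 0 := by
    rintro rfl
    apply hB'
    linear_combination hprod
  have hb0 : b ≠ 0 := by
    rintro rfl
    apply hB'
    linear_combination hprod
  have hx : ∀ n, (G (n + 1) : ZMod ℓ) - b * G n = a ^ n * (G 1 - b * G 0) := by
    intro n
    induction n with
    | zero => simp
    | succ n ih =>
      rw [pow_succ]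
      linear_combination hrec n + a * ih - G (n + 1) * hsum + G n * hprod
  have hy : ∀ n, (G (n + 1) : ZMod ℓ) - a * G n = b ^ n * (G 1 - a * G 0) := by
    intro n
    induction n with
    | zero => simp
    | succ n ih =>
      rw [pow_succ]
      linear_combination hrec n + b * ih - G (n + 1) * hsum + G n * hprod
  have hg : ∀ n, (c : ZMod ℓ) * G n = a ^ n * (G 1 - b * G 0) - b ^ n * (G 1 - a * G 0) := by
    intro n
    linear_combination hx n - hy n - G n * hdiff
  have hL : ∀ n, (G (n + (ℓ - 1)) : ZMod ℓ) = G n := by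
    intro n
    apply mul_left_cancel₀ hD'
    rw [hg, hg, pow_add, pow_add, ZMod.pow_card_sub_one_eq_one ha0,
      ZMod.pow_card_sub_one_eq_one hb0, mul_one, mul_one]
  have hq : ∀ q n, (G (n + π * q) : ZMod ℓ) = G n := by
    intro q
    induction q with
    | zero => intro n; simp
    | succ q ih =>
      intro n
      rw [Nat.mul_succ, ← add_assoc, (ZMod.intCast_eq_intCast_iff _ _ ℓ).2 (hper _), ih]
  by_contra hnd
  have hr : 0 < (ℓ - 1) % π := Nat.pos_of_ne_zero fun h => hnd (Nat.dvd_of_mod_eq_zero h)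
  have hle : π ≤ (ℓ - 1) % π := by
    refine hmin ⟨hr, fun n => ?_⟩
    rw [← ZMod.intCast_eq_intCast_iff, ← hq ((ℓ - 1) / π), add_assoc, Nat.mod_add_div, hL]
  exact absurd (Nat.mod_lt (ℓ - 1) hpos) (not_lt.2 hle)
end

section
/- Let ℓ be an odd prime and let A, B, u, v be integers with ℓ not dividing B, and let G be the binary recurrence sequence with these data. Let Δ = A² + 4B be the discriminant. If Δ is not a square modulo ℓ (i.e. there is no integer c with c² ≡ Δ (mod ℓ)), then the least positive integer k such that G_{n+k} ≡ G_n (mod ℓ) for all n ≥ 0 divides ℓ² - 1. -/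
/-- If an odd prime `ℓ` does not divide `B` and the discriminant `Δ = A² + 4B` is not a
square modulo `ℓ`, then the minimal period of the binary recurrence sequence modulo `ℓ`
divides `ℓ² - 1`. -/
theorem period_dvd_of_discriminant_nonsquare
    (ℓ : ℕ) (hℓ : Nat.Prime ℓ) (hodd : Odd ℓ) (A B u v : ℤ) (hB : ¬ (ℓ : ℤ) ∣ B)
    (G : ℕ → ℤ) (hG0 : G 0 = u) (hG1 : G 1 = v)
    (hGrec : ∀ n : ℕ, G (n + 2) = A * G (n + 1) + B * G n)
    (hnsq : ¬ ∃ c : ℤ, c ^ 2 ≡ A ^ 2 + 4 * B [ZMOD (ℓ : ℤ)])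
    (π : ℕ)
    (hπ : IsLeast {k : ℕ | 0 < k ∧ ∀ n : ℕ, G (n + k) ≡ G n [ZMOD (ℓ : ℤ)]} π) :
    π ∣ ℓ ^ 2 - 1 := by
  have : Fact ℓ.Prime := ⟨hℓ⟩
  obtain ⟨K, iF, iC, iA⟩ : ∃ (K : Type) (_ : Field K), CharP K ℓ ∧ IsAlgClosed K :=
    ⟨AlgebraicClosure (ZMod ℓ), inferInstance, inferInstance, inferInstance⟩
  have cz : ∀ a b : ℤ, a ≡ b [ZMOD (ℓ : ℤ)] ↔ (a : K) = (b : K) := by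
    intro a b
    rw [CharP.intCast_eq_intCast K ℓ]
  have hB0 : (B : K) ≠ 0 := by
    intro h
    exact hB ((CharP.intCast_eq_zero_iff K ℓ B).1 h)
  have hD : (A : K) ^ 2 + 4 * (B : K) ≠ 0 := by
    intro h
    apply hnsq
    refine ⟨0, ?_⟩
    rw [cz]
    push_cast
    rw [h]
  have h2 : (2 : K) ≠ 0 := by
    intro h
    have h' : ((2 : ℕ) : K) = 0 := by exact_mod_cast h
    rw [CharP.cast_eq_zero_iff K ℓ] at h'
    have := (Nat.prime_dvd_prime_iff_eq hℓ Nat.prime_two).1 h'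
    subst this
    exact absurd hodd (by decide)
  obtain ⟨s, hs⟩ := IsAlgClosed.exists_pow_nat_eq ((A : K) ^ 2 + 4 * (B : K)) (n := 2) (by norm_num)
  obtain ⟨α, hα⟩ : ∃ α : K, 2 * α = A + s := ⟨(A + s) / 2, by field_simp⟩
  have hroot : α ^ 2 = A * α + B := by
    have : (4 : K) * (α ^ 2 - (A * α + B)) = 0 := by
      linear_combination (2 * α + s - A) * hα + hs
    have h4 : (4 : K) ≠ 0 := by
      have := mul_ne_zero h2 h2
      intro h
      apply this
      linear_combination h
    exact sub_eq_zero.1 ((mul_eq_zero.1 this).resolve_left h4)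
  have key : ∀ x : K, x ^ 2 = A * x + B → x ^ (ℓ ^ 2 - 1) = 1 := by
    intro x hx
    have hx0 : x ≠ 0 := by
      rintro rfl
      apply hB0
      linear_combination -hx
    have hfA : ((A : K)) ^ ℓ = A := by
      have := map_intCast (frobenius K ℓ) A
      rwa [frobenius_def] at this
    have hfB : ((B : K)) ^ ℓ = B := by
      have := map_intCast (frobenius K ℓ) B
      rwa [frobenius_def] at this
    have h1 : (x ^ ℓ) ^ 2 = A * x ^ ℓ + B := by
      calc (x ^ ℓ) ^ 2 = (x ^ 2) ^ ℓ := by ring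
        _ = _ := by rw [hx, add_pow_char, mul_pow, hfA, hfB]
    have h3 : (x ^ ℓ - x) * (x ^ ℓ - (A - x)) = 0 := by
      linear_combination h1 - hx
    have h5 : x ^ (ℓ ^ 2) = x := by
      rw [pow_two, pow_mul]
      rcases mul_eq_zero.1 h3 with h | h
      · rw [sub_eq_zero] at h
        rw [h, h]
      · rw [sub_eq_zero] at h
        rw [h, sub_pow_char, hfA, h]
        ring
    have h6 : ℓ ^ 2 = (ℓ ^ 2 - 1) + 1 := by
      have := pow_pos hℓ.pos 2
      omega
    rw [h6, pow_succ] at h5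
    exact mul_right_cancel₀ hx0 (by rw [h5, one_mul])
  have gen : ∀ x : K, x ^ 2 = A * x + B → ∀ n, (G (n + 1) : K) - (A - x) * G n
      = x ^ n * (v - (A - x) * u) := by
    intro x hx n
    induction n with
    | zero => simp [hG0, hG1]
    | succ n ih =>
      have hr := congrArg (Int.cast : ℤ → K) (hGrec n)
      push_cast at hr
      rw [pow_succ]
      linear_combination hr + x * ih - (G n : K) * hx
  have hroot' : ((A : K) - α) ^ 2 = A * (A - α) + B := by
    linear_combination hroot
  have hper : ∀ n, G (n + (ℓ ^ 2 - 1)) ≡ G n [ZMOD (ℓ : ℤ)] := by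
    intro n
    rw [cz]
    have hne : 2 * α - A ≠ 0 := by
      rw [hα]
      intro h
      apply hD
      rw [← hs]
      have : s = 0 := by linear_combination h
      rw [this]
      simp
    have e1 := gen α hroot n
    have e2 := gen _ hroot' n
    have e3 := gen α hroot (n + (ℓ ^ 2 - 1))
    have e4 := gen _ hroot' (n + (ℓ ^ 2 - 1))
    rw [pow_add, key _ hroot] at e3
    rw [pow_add, key _ hroot'] at e4
    apply mul_left_cancel₀ hne
    linear_combination e3 - e4 - e1 + e2
  obtain ⟨⟨hpos, hp⟩, hmin⟩ := hπ
  have hmul : ∀ m n, G (n + π * m) ≡ G n [ZMOD (ℓ : ℤ)] := by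
    intro m
    induction m with
    | zero => intro n; simp [Int.ModEq.refl]
    | succ m ih =>
      intro n
      rw [Nat.mul_succ, ← add_assoc]
      exact (hp _).trans (ih n)
  by_contra hnd
  have hlt := Nat.mod_lt (ℓ ^ 2 - 1) hpos
  have h0 : 0 < (ℓ ^ 2 - 1) % π := Nat.pos_of_ne_zero fun h => hnd (Nat.dvd_of_mod_eq_zero h)
  have := hmin ⟨h0, fun n => by
    have a := hmul ((ℓ ^ 2 - 1) / π) (n + (ℓ ^ 2 - 1) % π)
    rw [add_assoc, Nat.mod_add_div] at a
    exact a.symm.trans (hper n)⟩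
  omega
end

section
/- Let p be an odd prime, r ≥ 1 an integer, and λ a nonzero integer that is not the p-th power of an integer. Let ζ ∈ ℂ be a primitive p^r-th root of unity and let α ∈ ℂ be any root of X^{p^r} - λ. Then the degree of the field extension ℚ(ζ, α) over ℚ(ζ) equals p^r. -/
open Polynomial in
theorem aux_mem (K : Type*) {L : Type*} [Field K] [Field L] [Algebra K L]
    (ζ : L) (n : ℕ) [NeZero n] (hζ : IsPrimitiveRoot ζ n) (hζint : IsIntegral K ζ)
    (b : L) (hb : b ∈ IntermediateField.adjoin K ({ζ} : Set L)) (x : L)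
    (hx : aeval x (minpoly K b) = 0) : x ∈ IntermediateField.adjoin K ({b} : Set L) := by
  have hcyc : IsCyclotomicExtension {n} K (IntermediateField.adjoin K ({ζ} : Set L)) := by
    change IsCyclotomicExtension {n} K (IntermediateField.adjoin K {ζ}).toSubalgebra
    rw [IntermediateField.adjoin_simple_toSubalgebra_of_isAlgebraic hζint.isAlgebraic]
    exact hζ.adjoin_isCyclotomicExtension K
  have hab : IsAbelianGalois K (IntermediateField.adjoin K ({ζ} : Set L)) :=
    IsCyclotomicExtension.isAbelianGalois {n} K _
  have hle : IntermediateField.adjoin K ({b} : Set L) ≤ IntermediateField.adjoin K ({ζ} : Set L) :=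
    IntermediateField.adjoin_simple_le_iff.mpr hb
  have hab' : IsAbelianGalois K (IntermediateField.adjoin K ({b} : Set L)) :=
    IsAbelianGalois.of_algHom (IntermediateField.inclusion hle)
  have hnormal : Normal K (IntermediateField.adjoin K ({b} : Set L)) := inferInstance
  have hint := hnormal.isIntegral (IntermediateField.AdjoinSimple.gen K b)
  have hs := hnormal.splits (IntermediateField.AdjoinSimple.gen K b)
  have h0 := minpoly.ne_zero hint
  rw [IntermediateField.minpoly_gen] at hs h0
  obtain ⟨y, hy⟩ := hs.mem_range_of_isRoot (x := x)
    (i := algebraMap (IntermediateField.adjoin K ({b} : Set L)) L) (map_ne_zero h0) (by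
      rw [map_map, ← IsScalarTower.algebraMap_eq, IsRoot, eval_map_algebraMap]
      exact hx)
  rw [← hy]
  exact y.2

open Polynomial in
theorem aux_no_root
    (p : ℕ) (hp : Nat.Prime p) (hodd : Odd p) (r : ℕ) (hr : 1 ≤ r)
    (lam : ℤ) (hlam0 : lam ≠ 0) (hlam : ¬ ∃ m : ℤ, m ^ p = lam)
    (ζ : ℂ) (hζ : IsPrimitiveRoot ζ (p ^ r)) (b : ℂ)
    (hb : b ∈ IntermediateField.adjoin ℚ ({ζ} : Set ℂ)) (hbp : b ^ p = (lam : ℂ)) : False := by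
  have hp3 : 3 ≤ p := by
    have := hp.two_le
    rcases hodd with ⟨k, hk⟩
    omega
  have hpr : 0 < p ^ r := pow_pos hp.pos r
  have : NeZero (p ^ r) := ⟨hpr.ne'⟩
  have hb0 : b ≠ 0 := by
    rintro rfl
    rw [zero_pow hp.ne_zero] at hbp
    exact hlam0 (by exact_mod_cast hbp.symm)
  have hirr : Irreducible (X ^ p - C (lam : ℚ)) := by
    apply X_pow_sub_C_irreducible_of_prime hp
    intro c hc
    have hint : IsIntegral ℤ c := by
      apply IsIntegral.of_pow hp.pos
      rw [hc]
      exact isIntegral_algebraMap (R := ℤ) (A := ℚ) (x := lam)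
    obtain ⟨m, hm⟩ := IsIntegrallyClosed.isIntegral_iff.mp hint
    refine hlam ⟨m, ?_⟩
    rw [← hm] at hc
    have : (m : ℚ) ^ p = lam := by simpa using hc
    exact_mod_cast this
  have hmonic : (X ^ p - C (lam : ℚ)).Monic := monic_X_pow_sub_C _ hp.ne_zero
  have hroot : ∀ c : ℂ, c ^ p = lam → aeval c (X ^ p - C (lam : ℚ)) = 0 := by
    intro c hc
    simp [hc]
  have hmin : X ^ p - C (lam : ℚ) = minpoly ℚ b :=
    minpoly.eq_of_irreducible_of_monic hirr (hroot b hbp) hmonic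
  have hbint : IsIntegral ℚ b := ⟨_, hmonic, by simpa [aeval_def] using hroot b hbp⟩
  have hζint : IsIntegral ℚ ζ := (hζ.isIntegral hpr).tower_top
  have hη : IsPrimitiveRoot (ζ ^ (p ^ (r - 1))) p := by
    apply hζ.pow hpr
    rw [← pow_succ, Nat.sub_add_cancel hr]
  set η := ζ ^ (p ^ (r - 1)) with hηdef
  have hbF : b ∈ IntermediateField.adjoin ℚ ({b} : Set ℂ) :=
    IntermediateField.mem_adjoin_simple_self ℚ b
  have hηb : η * b ∈ IntermediateField.adjoin ℚ ({b} : Set ℂ) := by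
    apply aux_mem ℚ ζ (p ^ r) hζ hζint b hb
    rw [← hmin]
    exact hroot (η * b) (by rw [mul_pow, hη.pow_eq_one, one_mul, hbp])
  have hηF : η ∈ IntermediateField.adjoin ℚ ({b} : Set ℂ) := by
    have := div_mem hηb hbF
    rwa [mul_div_cancel_right₀ _ hb0] at this
  have hdvd := IntermediateField.finrank_dvd_of_le_right
    (IntermediateField.adjoin_simple_le_iff.mpr hηF)
  rw [IntermediateField.adjoin.finrank ((hη.isIntegral hp.pos).tower_top),
    IntermediateField.adjoin.finrank hbint, ← hmin, natDegree_X_pow_sub_C,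
    ← cyclotomic_eq_minpoly_rat hη hp.pos, natDegree_cyclotomic, Nat.totient_prime hp] at hdvd
  rcases (Nat.dvd_prime hp).mp hdvd with h | h <;> omega

open Polynomial in
/-- Let `p` be an odd prime, `r ≥ 1`, and `lam` a nonzero integer which is not a `p`-th
power of an integer. If `ζ ∈ ℂ` is a primitive `p^r`-th root of unity and `α ∈ ℂ` is a
root of `X^(p^r) - lam`, then `[ℚ(ζ, α) : ℚ(ζ)] = p^r`. -/
theorem degree_of_radical_extension
    (p : ℕ) (hp : Nat.Prime p) (hodd : Odd p) (r : ℕ) (hr : 1 ≤ r)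
    (lam : ℤ) (hlam0 : lam ≠ 0) (hlam : ¬ ∃ m : ℤ, m ^ p = lam)
    (ζ α : ℂ) (hζ : IsPrimitiveRoot ζ (p ^ r)) (hα : α ^ (p ^ r) = (lam : ℂ)) :
    Module.finrank (IntermediateField.adjoin ℚ ({ζ} : Set ℂ))
      (IntermediateField.adjoin (IntermediateField.adjoin ℚ ({ζ} : Set ℂ))
        ({α} : Set ℂ)) = p ^ r := by
  have hp2 : p ≠ 2 := by
    rintro rfl
    revert hodd
    decide
  have hpr : p ^ r ≠ 0 := (pow_pos hp.pos r).ne'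
  have hirr : Irreducible
      (X ^ (p ^ r) - C ((lam : ℤ) : IntermediateField.adjoin ℚ ({ζ} : Set ℂ))) := by
    apply X_pow_sub_C_irreducible_of_prime_pow hp hp2
    intro b hb
    refine aux_no_root p hp hodd r hr lam hlam0 hlam ζ hζ b b.2 ?_
    have := congrArg (fun x : IntermediateField.adjoin ℚ ({ζ} : Set ℂ) => (x : ℂ)) hb
    simpa using this
  have hmonic := monic_X_pow_sub_C ((lam : ℤ) : IntermediateField.adjoin ℚ ({ζ} : Set ℂ)) hpr
  have hroot : aeval α
      (X ^ (p ^ r) - C ((lam : ℤ) : IntermediateField.adjoin ℚ ({ζ} : Set ℂ))) = 0 := by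
    simp [hα]
  have hmin := minpoly.eq_of_irreducible_of_monic hirr hroot hmonic
  rw [IntermediateField.adjoin.finrank ⟨_, hmonic, by simpa [aeval_def] using hroot⟩, ← hmin,
    natDegree_X_pow_sub_C]
end

section
/- Let p be an odd prime and r ≥ 1 an integer. Let λ₁, λ₂ be nonzero integers such that for all integers i, j, if λ₁^i·λ₂^j is the p-th power of a rational number then p divides i and p divides j. Let ζ ∈ ℂ be a primitive p^r-th root of unity and let α₁, α₂ ∈ ℂ be roots of X^{p^r} - λ₁ and X^{p^r} - λ₂ respectively. Then the intersection of the fields ℚ(ζ, α₁) and ℚ(ζ, α₂) (as subfields of ℂ) equals ℚ(ζ). -/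
open Polynomial IntermediateField in
lemma rei_kummer {K L : Type*} [Field K] [Field L] [Algebra K L] {p s : ℕ} (hp : p.Prime)
    {ζ : K} (hζ : IsPrimitiveRoot ζ (p ^ (s + 1))) {α : L} {a : K} (ha : a ≠ 0)
    (hα : α ^ (p ^ (s + 1)) = algebraMap K L a) (htop : K⟮α⟯ = ⊤)
    (H : Irreducible (X ^ (p ^ (s + 1)) - C a)) {β : L} {b : K} (hb : b ≠ 0)
    (hβ : β ^ p = algebraMap K L b) : ∃ (c : K) (k : ℕ), c ^ p * a ^ k = b := by
  have hn : 0 < p ^ (s + 1) := pow_pos hp.pos _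
  have : NeZero (p ^ (s + 1)) := ⟨hn.ne'⟩
  have hroot : aeval α (X ^ (p ^ (s + 1)) - C a) = 0 := by simp [hα]
  have hmin : X ^ (p ^ (s + 1)) - C a = minpoly K α :=
    minpoly.eq_of_irreducible_of_monic H hroot (monic_X_pow_sub_C _ hn.ne')
  have hint : IsIntegral K α := ⟨_, monic_X_pow_sub_C _ hn.ne', hroot⟩
  have hfin : Module.finrank K L = p ^ (s + 1) := by
    rw [← IntermediateField.finrank_top', ← htop, adjoin.finrank hint, ← hmin,
      natDegree_X_pow_sub_C]
  have : FiniteDimensional K L := FiniteDimensional.of_finrank_pos (hfin ▸ hn)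
  have hprim : (primitiveRoots (Module.finrank K L) K).Nonempty :=
    ⟨ζ, by rw [hfin]; exact (mem_primitiveRoots hn).mpr hζ⟩
  have hsf : IsSplittingField K L (X ^ (p ^ (s + 1)) - C a) := by
    have := isSplittingField_X_pow_sub_C_of_root_adjoin_eq_top (K := K) (L := L) hprim
      (a := a) (α := α) (by rw [hfin]; exact hα) htop
    rwa [hfin] at this
  have : IsGalois K L := isGalois_of_isSplittingField_X_pow_sub_C
    ⟨ζ, (mem_primitiveRoots hn).mpr hζ⟩ H L
  have hα0 : α ≠ 0 := by
    rintro rfl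
    rw [zero_pow hn.ne'] at hα
    exact ha ((map_eq_zero _).1 hα.symm)
  have hβ0 : β ≠ 0 := by
    rintro rfl
    rw [zero_pow hp.ne_zero] at hβ
    exact hb ((map_eq_zero _).1 hβ.symm)
  set e := autEquivZmod H L hζ with he
  set σ := e.symm (Multiplicative.ofAdd ((1 : ℕ) : ZMod (p ^ (s + 1)))) with hσ
  have hσα : σ α = algebraMap K L ζ * α := by
    have := autEquivZmod_symm_apply_natCast H L hα hζ 1
    rw [pow_one, Algebra.smul_def] at this
    exact this
  have hgen : ∀ τ : Gal(L/K), ∃ m : ℕ, τ = σ ^ m := by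
    intro τ
    obtain ⟨z, rfl⟩ := e.symm.surjective τ
    obtain ⟨m, hm⟩ := ZMod.natCast_zmod_surjective (Multiplicative.toAdd z)
    refine ⟨m, ?_⟩
    rw [hσ, ← map_pow, ← ofAdd_nsmul]
    congr 1
    rw [nsmul_eq_mul, Nat.cast_one, mul_one, hm]
    rfl
  have hω : IsPrimitiveRoot (algebraMap K L ζ ^ (p ^ s)) p :=
    (hζ.map_of_injective (algebraMap K L).injective).pow hn (pow_succ p s)
  have hq : (σ β / β) ^ p = 1 := by
    rw [div_pow, ← map_pow, hβ, AlgEquiv.commutes, div_self]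
    exact (_root_.map_ne_zero _).2 hb
  have : NeZero p := ⟨hp.ne_zero⟩
  obtain ⟨k, -, hk⟩ := hω.eq_pow_of_pow_eq_one hq
  rw [eq_div_iff hβ0] at hk
  have hζ0 : algebraMap K L ζ ≠ 0 := (_root_.map_ne_zero _).2 (hζ.ne_zero hn.ne')
  have hfix : σ (β / (α ^ p ^ s) ^ k) = β / (α ^ p ^ s) ^ k := by
    rw [map_div₀, map_pow, map_pow, hσα, ← hk, mul_pow, mul_pow]
    have h2 : ((algebraMap K L ζ) ^ p ^ s) ^ k ≠ 0 := by positivity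
    rw [mul_div_mul_left _ _ h2]
  have hmem : β / (α ^ p ^ s) ^ k ∈ (⊥ : IntermediateField K L) := by
    rw [IsGalois.mem_bot_iff_fixed]
    intro τ
    obtain ⟨m, rfl⟩ := hgen τ
    induction m with
    | zero => simp
    | succ m ih => rw [pow_succ, AlgEquiv.mul_apply, hfix, ih]
  obtain ⟨c, hc⟩ := IntermediateField.mem_bot.1 hmem
  refine ⟨c, k, (algebraMap K L).injective ?_⟩
  rw [map_mul, map_pow, map_pow, hc, ← hα, ← hβ, div_pow]
  have : ((α ^ p ^ s) ^ k) ^ p = (α ^ p ^ (s + 1)) ^ k := by ring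
  rw [this, div_mul_cancel₀]
  exact pow_ne_zero _ (pow_ne_zero _ hα0)

open Polynomial IntermediateField in
lemma rei_inter {K E : Type*} [Field K] [Field E] [Algebra K E] {n : ℕ} (hn : 0 < n) {α : E} {a : K}
    (hα : α ^ n = algebraMap K E a) (M : IntermediateField K E)
    (H : Irreducible (X ^ n - C (algebraMap K M a))) {x : E} (hxM : x ∈ M) (hx : x ∈ K⟮α⟯) :
    x ∈ (⊥ : IntermediateField K E) := by
  have hroot : aeval α (X ^ n - C (algebraMap K M a)) = 0 := by
    simp [hα, ← IsScalarTower.algebraMap_apply]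
  have hmin := minpoly.eq_of_irreducible_of_monic H hroot (monic_X_pow_sub_C _ hn.ne')
  have hrootK : aeval α (X ^ n - C a) = 0 := by simp [hα]
  have hint : IsIntegral K α := ⟨_, monic_X_pow_sub_C _ hn.ne', hrootK⟩
  rw [← mem_toSubalgebra, adjoin_simple_toSubalgebra_of_isAlgebraic hint.isAlgebraic,
    Algebra.adjoin_singleton_eq_range_aeval] at hx
  obtain ⟨f, hf⟩ := hx
  set g := f %ₘ (X ^ n - C a) with hg
  have hgx : aeval α g = x := by
    rw [hg, aeval_modByMonic_eq_self_of_root hrootK]; exact hf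
  have hgd : g.degree < n := by
    rw [← degree_X_pow_sub_C hn a]
    exact degree_modByMonic_lt _ (monic_X_pow_sub_C _ hn.ne')
  set h : M[X] := g.map (algebraMap K M) - C ⟨x, hxM⟩ with hh
  have hh0 : h = 0 := by
    by_contra hne
    have h1 : aeval α h = 0 := by
      rw [hh, map_sub, aeval_map_algebraMap, hgx, aeval_C]
      exact sub_self x
    have h2 := minpoly.degree_le_of_ne_zero M α hne h1
    rw [← hmin, degree_X_pow_sub_C hn] at h2
    refine absurd h2 (not_le.2 ?_)
    refine (degree_sub_le _ _).trans_lt (max_lt (by rwa [degree_map]) ?_)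
    exact degree_C_le.trans_lt (by exact_mod_cast hn)
  have h3 : (algebraMap K M (g.coeff 0)) = ⟨x, hxM⟩ := by
    have := congrArg (fun q => q.coeff 0) hh0
    simpa [hh, sub_eq_zero] using this
  rw [IntermediateField.mem_bot]
  exact ⟨g.coeff 0, congrArg Subtype.val h3⟩

open Polynomial IntermediateField in
lemma rei_cyc {k K : Type*} [Field k] [Field K] [Algebra k K] [IsAbelianGalois k K]
    [CharZero k] [CharZero K] {p : ℕ} (hp : p.Prime) (hirr : Irreducible (cyclotomic p k))
    (hp2 : p ≠ 2) {ω : K} (hω : IsPrimitiveRoot ω p) {a : k} (ha : a ≠ 0) {x : K}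
    (hx : x ^ p = algebraMap k K a) : ∃ q : k, q ^ p = a := by
  have : NeZero (p : k) := ⟨by exact_mod_cast hp.ne_zero⟩
  by_contra! hne
  have H := X_pow_sub_C_irreducible_of_prime hp hne
  have hroot : ∀ y : K, y ^ p = algebraMap k K a → aeval y (X ^ p - C a) = 0 := by
    intro y hy; simp only [map_sub, map_pow, aeval_X, aeval_C, hy, sub_self]
  have hm := monic_X_pow_sub_C a hp.ne_zero
  have hmin := minpoly.eq_of_irreducible_of_monic H (hroot x hx) hm
  have hint : IsIntegral k x := ⟨_, hm, hroot x hx⟩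
  have hx0 : x ≠ 0 := by
    rintro rfl
    rw [zero_pow hp.ne_zero] at hx
    exact ha ((map_eq_zero _).1 hx.symm)
  have hxF : x ∈ k⟮x⟯ := mem_adjoin_simple_self k x
  have hωx : ω * x ∈ k⟮x⟯ := by
    have hN : Normal k k⟮x⟯ := inferInstance
    have hsp := hN.splits (⟨x, hxF⟩ : k⟮x⟯)
    have h1 : minpoly k (⟨x, hxF⟩ : k⟮x⟯) = X ^ p - C a := by
      rw [hmin, ← minpoly.algebraMap_eq (algebraMap k⟮x⟯ K).injective]
      rfl
    rw [h1] at hsp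
    have h2 := hsp.mem_range_of_isRoot (i := algebraMap k⟮x⟯ K) (x := ω * x)
      ((monic_X_pow_sub_C a hp.ne_zero).map _).ne_zero (by
        rw [Polynomial.map_map, ← IsScalarTower.algebraMap_eq, IsRoot.def, eval_map, ← aeval_def]
        exact hroot _ (by rw [mul_pow, hω.pow_eq_one, one_mul, hx]))
    obtain ⟨y, hy⟩ := h2
    rw [← hy]; exact y.2
  have hωF : ω ∈ k⟮x⟯ := by
    have := div_mem hωx hxF
    rwa [mul_div_cancel_right₀ _ hx0] at this
  have hfx : Module.finrank k k⟮x⟯ = p := by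
    rw [adjoin.finrank hint, ← hmin, natDegree_X_pow_sub_C]
  have hfω : Module.finrank k k⟮ω⟯ = p - 1 := by
    rw [adjoin.finrank (hω.isIntegral hp.pos).tower_top,
      ← hω.minpoly_eq_cyclotomic_of_irreducible hirr,
      natDegree_cyclotomic, Nat.totient_prime hp]
  have hle : k⟮ω⟯ ≤ k⟮x⟯ := by
    rwa [adjoin_simple_le_iff]
  have hdvd := finrank_dvd_of_le_right hle
  rw [hfx, hfω] at hdvd
  have := hp.two_le
  rcases (Nat.dvd_prime hp).1 hdvd with h | h <;> omega

theorem radical_extensions_intersection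
    (p : ℕ) (hp : Nat.Prime p) (hodd : Odd p) (r : ℕ) (hr : 1 ≤ r)
    (l₁ l₂ : ℤ) (hl₁ : l₁ ≠ 0) (hl₂ : l₂ ≠ 0)
    (hind : ∀ i j : ℤ, (∃ q : ℚ, q ^ p = (l₁ : ℚ) ^ i * (l₂ : ℚ) ^ j) →
      (p : ℤ) ∣ i ∧ (p : ℤ) ∣ j)
    (ζ α₁ α₂ : ℂ) (hζ : IsPrimitiveRoot ζ (p ^ r))
    (hα₁ : α₁ ^ (p ^ r) = (l₁ : ℂ)) (hα₂ : α₂ ^ (p ^ r) = (l₂ : ℂ)) :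
    IntermediateField.adjoin ℚ ({ζ, α₁} : Set ℂ) ⊓
        IntermediateField.adjoin ℚ ({ζ, α₂} : Set ℂ)
      = IntermediateField.adjoin ℚ ({ζ} : Set ℂ) := by
  obtain ⟨s, rfl⟩ : ∃ s, r = s + 1 := ⟨r - 1, by omega⟩
  have hp2 : p ≠ 2 := by rintro rfl; exact absurd hodd (by decide)
  have hn : 0 < p ^ (s + 1) := pow_pos hp.pos _
  have : NeZero (p ^ (s + 1)) := ⟨hn.ne'⟩
  apply le_antisymm
  swap
  · exact le_inf (IntermediateField.adjoin.mono _ _ _ (by simp))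
      (IntermediateField.adjoin.mono _ _ _ (by simp))
  set K := IntermediateField.adjoin ℚ ({ζ} : Set ℂ) with hK
  have hint : IsIntegral ℚ ζ := (hζ.isIntegral hn).tower_top
  have : IsCyclotomicExtension {p ^ (s + 1)} ℚ K := by
    change IsCyclotomicExtension {p ^ (s + 1)} ℚ K.toSubalgebra
    rw [hK, IntermediateField.adjoin_simple_toSubalgebra_of_isAlgebraic hint.isAlgebraic]
    exact hζ.adjoin_isCyclotomicExtension ℚ
  have : IsAbelianGalois ℚ K := IsCyclotomicExtension.isAbelianGalois {p ^ (s + 1)} ℚ K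
  have hζK : IsPrimitiveRoot (⟨ζ, IntermediateField.mem_adjoin_simple_self ℚ ζ⟩ : K)
      (p ^ (s + 1)) := by
    refine IsPrimitiveRoot.of_map_of_injective (f := algebraMap K ℂ) ?_ (algebraMap K ℂ).injective
    exact hζ
  set z : K := ⟨ζ, IntermediateField.mem_adjoin_simple_self ℚ ζ⟩ with hz
  have hω : IsPrimitiveRoot (z ^ (p ^ s)) p := hζK.pow hn (pow_succ p s)
  have hq₁ : (l₁ : ℚ) ≠ 0 := by exact_mod_cast hl₁
  have hq₂ : (l₂ : ℚ) ≠ 0 := by exact_mod_cast hl₂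
  have hnd : ¬ (p : ℤ) ∣ 1 := by
    intro h
    have h' : p ∣ 1 := by exact_mod_cast h
    exact hp.one_lt.ne' (Nat.dvd_one.1 h')
  -- no power relation over K
  have key : ∀ i j : ℤ, (∃ c : K, c ^ p = algebraMap ℚ K ((l₁ : ℚ) ^ i * (l₂ : ℚ) ^ j)) →
      (p : ℤ) ∣ i ∧ (p : ℤ) ∣ j := by
    rintro i j ⟨c, hc⟩
    exact hind i j (rei_cyc hp (Polynomial.cyclotomic.irreducible_rat hp.pos) hp2 hω (mul_ne_zero (zpow_ne_zero _ hq₁) (zpow_ne_zero _ hq₂)) hc)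
  have hK₁ : (l₁ : K) ≠ 0 := by exact_mod_cast hl₁
  have hK₂ : (l₂ : K) ≠ 0 := by exact_mod_cast hl₂
  have Hirr : Irreducible (Polynomial.X ^ (p ^ (s + 1)) - Polynomial.C (l₂ : K)) := by
    apply X_pow_sub_C_irreducible_of_prime_pow hp hp2
    intro b hb
    exact hnd (key 0 1 ⟨b, by simp [hb]⟩).2
  set M := IntermediateField.adjoin K ({α₂} : Set ℂ) with hM
  have HM : Irreducible (Polynomial.X ^ (p ^ (s + 1)) -
      Polynomial.C (algebraMap K M (l₁ : K))) := by
    apply X_pow_sub_C_irreducible_of_prime_pow hp hp2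
    intro b hb
    obtain ⟨c, k, hck⟩ := rei_kummer (L := M) hp hζK (a := (l₂ : K)) hK₂
      (α := IntermediateField.AdjoinSimple.gen K α₂)
      (by
        apply (algebraMap M ℂ).injective
        rw [map_pow, IntermediateField.AdjoinSimple.algebraMap_gen, hα₂]
        simp)
      (by
        apply IntermediateField.lift_injective
        rw [IntermediateField.lift_adjoin_simple, IntermediateField.lift_top,
          IntermediateField.AdjoinSimple.coe_gen]) Hirr hK₁ hb
    refine hnd (key 1 (-k) ⟨c, ?_⟩).1
    rw [map_mul, map_zpow₀, map_zpow₀, map_intCast, map_intCast, ← hck, zpow_one, zpow_neg,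
      zpow_natCast, mul_assoc, mul_inv_cancel₀ (pow_ne_zero _ hK₂), mul_one]
  rintro x ⟨hx1, hx2⟩
  have e : ∀ β : ℂ, IntermediateField.adjoin ℚ ({ζ, β} : Set ℂ) =
      (IntermediateField.adjoin K ({β} : Set ℂ)).restrictScalars ℚ := by
    intro β
    exact (IntermediateField.adjoin_simple_adjoin_simple ℚ ζ β).symm
  rw [e] at hx1 hx2
  have := rei_inter (K := K) (E := ℂ) hn (α := α₁) (a := (l₁ : K)) (by rw [hα₁]; simp) M HM hx2 hx1
  obtain ⟨y, hy⟩ := IntermediateField.mem_bot.1 this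
  rw [← hy]
  exact y.2
end

section
/- Let p be an odd prime and r ≥ 1 an integer. Let λ₁, λ₂ be nonzero integers such that for all integers i, j, if λ₁^i·λ₂^j is the p-th power of a rational number then p divides i and p divides j. Let ζ ∈ ℂ be a primitive p^{r+1}-th root of unity, so that ζ^p is a primitive p^r-th root of unity, and let α₁, α₂ ∈ ℂ be roots of X^{p^r} - λ₁ and X^{p^r} - λ₂ respectively. Then the intersection of ℚ(ζ) with ℚ(ζ^p, α₁, α₂) (as subfields of ℂ) equals ℚ(ζ^p). -/
open IntermediateField Polynomial in
lemma aux_kummer {K E : Type*} [Field K] [Field E] [Algebra K E] [CharZero K] (n : ℕ) (hn : 0 < n)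
    (w : K) (hw : IsPrimitiveRoot w n) (S : Set E) [Finite S]
    (hS : ∀ s ∈ S, ∃ c : K, s ^ n = algebraMap K E c)
    (z : E) (hz0 : z ≠ 0) (hz : z ∈ adjoin K S) (hzn : ∃ c : K, z ^ n = algebraMap K E c) :
    ∃ m ∈ Submonoid.closure S, ∃ c : K, z = algebraMap K E c * m := by
  have hint : ∀ s ∈ S, IsIntegral K s := by
    intro s hs
    obtain ⟨c, hc⟩ := hS s hs
    refine ⟨X ^ n - C c, monic_X_pow_sub_C c hn.ne', by simp [hc]⟩
  have hfin : FiniteDimensional K (adjoin K S) := finiteDimensional_adjoin hint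
  have hnorm : Normal K (adjoin K S) := by
    rw [normal_iff]
    rintro x
    refine ⟨Algebra.IsIntegral.isIntegral x, ?_⟩
    rw [minpoly_eq]
    refine splits_of_mem_adjoin K E (S := S) (fun s hs => ⟨hint s hs, ?_⟩) x.2
    obtain ⟨c, hc⟩ := hS s hs
    have h1 : minpoly K s ∣ X ^ n - C c := minpoly.dvd _ _ (by simp [hc])
    have h2 : (X ^ n - C (algebraMap K (adjoin K S) c)).Splits :=
      X_pow_sub_C_splits_of_isPrimitiveRoot (hw.map_of_injective (algebraMap K _).injective)
        (α := ⟨s, subset_adjoin K S hs⟩) (by ext; simpa using hc)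
    have h3 := Polynomial.map_dvd (algebraMap K (adjoin K S)) h1
    refine Splits.of_dvd h2 (X_pow_sub_C_ne_zero hn _) (by simpa using h3)
  have hgal : IsGalois K (adjoin K S) := ⟨⟩
  let z' : adjoin K S := ⟨z, hz⟩
  have hz'0 : z' ≠ 0 := fun h => hz0 (congrArg Subtype.val h)
  obtain ⟨cz, hcz⟩ := hzn
  by_contra hcon
  push Not at hcon
  have hpow : ∀ m ∈ Submonoid.closure S, ∃ c : K, m ^ n = algebraMap K E c := by
    intro m hm
    induction hm using Submonoid.closure_induction with
    | mem x hx => exact hS x hx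
    | one => exact ⟨1, by simp⟩
    | mul x y _ _ hx hy =>
      obtain ⟨a, ha⟩ := hx
      obtain ⟨b, hb⟩ := hy
      exact ⟨a * b, by rw [mul_pow, ha, hb, map_mul]⟩
  have hmon : ∀ m (hm : m ∈ Submonoid.closure S) (hm' : m ∈ adjoin K S),
      Algebra.trace K (adjoin K S) (z'⁻¹ * ⟨m, hm'⟩) = 0 := by
    intro m hm hm'
    by_contra htr
    set y : adjoin K S := z'⁻¹ * ⟨m, hm'⟩ with hy
    have hy0 : y ≠ 0 := by rintro h; rw [h] at htr; simp at htr
    obtain ⟨cm, hcm⟩ := hpow m hm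
    have hyn : y ^ n = algebraMap K _ (cz⁻¹ * cm) := by
      ext
      simp [hy, z', mul_pow, hcz, hcm]
    have hfix : ∀ σ : adjoin K S ≃ₐ[K] adjoin K S, σ y = y := by
      intro σ
      have h1 : (σ y / y) ^ n = 1 := by
        rw [div_pow, ← map_pow, hyn, AlgEquiv.commutes, ← hyn]
        exact div_self (pow_ne_zero _ hy0)
      have : NeZero n := ⟨hn.ne'⟩
      obtain ⟨i, -, hi⟩ := (hw.map_of_injective
        (algebraMap K (adjoin K S)).injective).eq_pow_of_pow_eq_one h1
      have h2 : σ y = (w ^ i) • y := by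
        rw [Algebra.smul_def, map_pow, hi, div_mul_cancel₀ _ hy0]
      have h3 : Algebra.trace K _ (σ y) = Algebra.trace K _ y := Algebra.trace_eq_of_algEquiv σ y
      rw [h2, map_smul, smul_eq_mul] at h3
      have h4 : w ^ i = 1 := by
        field_simp at h3
        exact h3
      rw [h2, h4, one_smul]
    obtain ⟨d, hd⟩ := (IsGalois.mem_range_algebraMap_iff_fixed y).2 hfix
    have hd0 : d ≠ 0 := by rintro rfl; exact hy0 (by rw [← hd, map_zero])
    apply hcon m hm d⁻¹
    have h5 : (algebraMap K (adjoin K S) d : E) = z⁻¹ * m := by rw [hd]; rfl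
    have h6 : algebraMap K E d = z⁻¹ * m := h5
    have hm0 : m ≠ 0 := by
      rintro rfl
      rw [mul_zero] at h6
      exact hd0 (by simpa using h6)
    rw [map_inv₀, h6]
    field_simp
  have hall : ∀ x ∈ Submodule.span K (Submonoid.closure S : Set E), ∀ hx' : x ∈ adjoin K S,
      Algebra.trace K (adjoin K S) (z'⁻¹ * ⟨x, hx'⟩) = 0 := by
    have hle : Submodule.span K (Submonoid.closure S : Set E) ≤
        Subalgebra.toSubmodule (adjoin K S).toSubalgebra := by
      rw [← Algebra.adjoin_eq_span]
      exact algebra_adjoin_le_adjoin K S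
    intro x hx
    induction hx using Submodule.span_induction with
    | mem x h => exact hmon x h
    | zero => 
      intro h
      have : (⟨0, h⟩ : adjoin K S) = 0 := rfl
      rw [this, mul_zero, map_zero]
    | add x y hx hy ihx ihy =>
      intro h
      have : (⟨x + y, h⟩ : adjoin K S) = ⟨x, hle hx⟩ + ⟨y, hle hy⟩ := rfl
      rw [this, mul_add, map_add, ihx, ihy, add_zero]
    | smul a x hx ih =>
      intro h
      have : (⟨a • x, h⟩ : adjoin K S) = a • ⟨x, hle hx⟩ := rfl
      rw [this, mul_smul_comm, map_smul, ih, smul_zero]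
  have hzs : z ∈ Submodule.span K (Submonoid.closure S : Set E) := by
    rw [← Algebra.adjoin_eq_span, ← adjoin_toSubalgebra_of_isAlgebraic
      (fun x hx => (hint x hx).isAlgebraic)]
    exact hz
  have := hall z hzs hz
  have h1 : z'⁻¹ * ⟨z, hz⟩ = 1 := inv_mul_cancel₀ hz'0
  rw [h1, ← map_one (algebraMap K _), Algebra.trace_algebraMap] at this
  simp at this
  exact Module.finrank_pos.ne' this

lemma aux_cyc (n : ℕ) (hn : 0 < n) (ζ : ℂ) (hζ : IsPrimitiveRoot ζ n) :
    IsCyclotomicExtension {n} ℚ (IntermediateField.adjoin ℚ ({ζ} : Set ℂ)) := by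
  have : NeZero n := ⟨hn.ne'⟩
  change IsCyclotomicExtension {n} ℚ (IntermediateField.adjoin ℚ {ζ}).toSubalgebra
  rw [IntermediateField.adjoin_simple_toSubalgebra_of_isAlgebraic
    ((hζ.isIntegral hn).tower_top.isAlgebraic)]
  exact hζ.adjoin_isCyclotomicExtension ℚ

lemma aux_rank (n : ℕ) (hn : 0 < n) (ζ : ℂ) (hζ : IsPrimitiveRoot ζ n) :
    Module.finrank ℚ (IntermediateField.adjoin ℚ ({ζ} : Set ℂ)) = n.totient := by
  have := aux_cyc n hn ζ hζ
  have : NeZero n := ⟨hn.ne'⟩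
  exact IsCyclotomicExtension.finrank _ (Polynomial.cyclotomic.irreducible_rat hn)

open IntermediateField in
lemma aux_real (p : ℕ) (hodd : Odd p) (n : ℕ) (hn : 0 < n) (ζ : ℂ)
    (hζ : IsPrimitiveRoot ζ n) (hpn : p ∣ n) (g : ℂ) (hg : g ∈ adjoin ℚ ({ζ} : Set ℂ)) (q : ℚ)
    (hgq : g ^ p = q) : ∃ t : ℚ, t ^ p = q := by
  have hp0 : p ≠ 0 := hodd.pos.ne'
  have hNZ : NeZero n := ⟨hn.ne'⟩
  have hcyc := aux_cyc n hn ζ hζ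
  have hcomm : IsMulCommutative (adjoin ℚ ({ζ} : Set ℂ) ≃ₐ[ℚ] adjoin ℚ ({ζ} : Set ℂ)) :=
    IsCyclotomicExtension.isMulCommutative {n} ℚ _
  have hgal : IsGalois ℚ (adjoin ℚ ({ζ} : Set ℂ)) := IsCyclotomicExtension.isGalois {n} ℚ _
  have hfd : FiniteDimensional ℚ (adjoin ℚ ({ζ} : Set ℂ)) :=
    IsCyclotomicExtension.finiteDimensional {n} ℚ _
  by_cases hq0 : q = 0
  · exact ⟨0, by rw [hq0, zero_pow hp0]⟩
  obtain ⟨k, rfl⟩ := hpn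
  have hη : IsPrimitiveRoot (ζ ^ k) p := hζ.pow hn (mul_comm _ _)
  obtain ⟨d, hd⟩ : ∃ d : ℝ, d ^ p = (q : ℝ) := by
    rcases le_total 0 (q : ℝ) with h | h
    · exact ⟨(q : ℝ) ^ ((p : ℝ)⁻¹), Real.rpow_inv_natCast_pow h hp0⟩
    · refine ⟨-(-(q : ℝ)) ^ ((p : ℝ)⁻¹), ?_⟩
      rw [hodd.neg_pow, Real.rpow_inv_natCast_pow (by linarith) hp0, neg_neg]
  have hdq : ((d : ℂ)) ^ p = q := by exact_mod_cast congrArg (fun x : ℝ => (x : ℂ)) hd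
  have hg0 : g ≠ 0 := by
    rintro rfl
    rw [zero_pow hp0] at hgq
    exact hq0 (by exact_mod_cast hgq.symm)
  have hNp : NeZero p := ⟨hp0⟩
  obtain ⟨i, -, hi⟩ := hη.eq_pow_of_pow_eq_one (ξ := d / g) (by
    rw [div_pow, hdq, ← hgq, div_self (pow_ne_zero _ hg0)])
  have hdm : (d : ℂ) ∈ adjoin ℚ ({ζ} : Set ℂ) := by
    have : (d : ℂ) = (ζ ^ k) ^ i * g := by rw [hi, div_mul_cancel₀ _ hg0]
    rw [this]
    exact mul_mem (pow_mem (pow_mem (mem_adjoin_simple_self ℚ ζ) _) _) hg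
  let d' : adjoin ℚ ({ζ} : Set ℂ) := ⟨d, hdm⟩
  let c0 : ℂ ≃ₐ[ℚ] ℂ := Complex.conjAe.restrictScalars ℚ
  let c := c0.restrictNormal (adjoin ℚ ({ζ} : Set ℂ))
  have hc : ∀ x : adjoin ℚ ({ζ} : Set ℂ), ((c x : adjoin ℚ ({ζ} : Set ℂ)) : ℂ) =
      (starRingEnd ℂ) (x : ℂ) := fun x => c0.restrictNormal_commutes _ x
  have hcd : c d' = d' := by
    ext
    rw [hc]
    exact Complex.conj_ofReal d
  have hfix : ∀ σ : adjoin ℚ ({ζ} : Set ℂ) ≃ₐ[ℚ] adjoin ℚ ({ζ} : Set ℂ), σ d' = d' := by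
    intro σ
    have h1 : c (σ d') = σ d' := by
      have : c * σ = σ * c := mul_comm' c σ
      have := congrArg (fun f => f d') this
      simpa [hcd] using this
    have h2 := congrArg Subtype.val h1
    rw [hc, Complex.conj_eq_iff_real] at h2
    obtain ⟨e, he⟩ := h2
    have hdp : d' ^ p = algebraMap ℚ _ q := by
      ext
      simpa [d'] using hdq
    have h3 : (σ d') ^ p = d' ^ p := by
      rw [← map_pow, hdp, AlgEquiv.commutes]
    have h4 : (e : ℂ) ^ p = (d : ℂ) ^ p := by
      rw [← he]
      exact congrArg Subtype.val h3
    have h5 : e = d := hodd.strictMono_pow.injective (by exact_mod_cast h4)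
    ext
    rw [he, h5]
  obtain ⟨t, ht⟩ := (IsGalois.mem_range_algebraMap_iff_fixed d').2 hfix
  have h7 : (t : ℂ) = d := by
    have := congrArg Subtype.val ht
    simpa [d'] using this
  refine ⟨t, ?_⟩
  rw [← h7] at hdq
  exact_mod_cast hdq


/-- Let `p` be an odd prime, `r ≥ 1`, and `l₁`, `l₂` nonzero integers that are
multiplicatively independent modulo `p`-th powers in `ℚ×`. If `ζ ∈ ℂ` is a primitive
`p^(r+1)`-th root of unity (so `ζ^p` is a primitive `p^r`-th root of unity) and
`α₁`, `α₂ ∈ ℂ` are roots of `X^(p^r) - l₁` and `X^(p^r) - l₂`, then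
`ℚ(ζ) ∩ ℚ(ζ^p, α₁, α₂) = ℚ(ζ^p)`. -/
theorem cyclotomic_radical_intersection
    (p : ℕ) (hp : Nat.Prime p) (hodd : Odd p) (r : ℕ) (hr : 1 ≤ r)
    (l₁ l₂ : ℤ) (hl₁ : l₁ ≠ 0) (hl₂ : l₂ ≠ 0)
    (hind : ∀ i j : ℤ, (∃ q : ℚ, q ^ p = (l₁ : ℚ) ^ i * (l₂ : ℚ) ^ j) →
      (p : ℤ) ∣ i ∧ (p : ℤ) ∣ j)
    (ζ α₁ α₂ : ℂ) (hζ : IsPrimitiveRoot ζ (p ^ (r + 1)))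
    (hα₁ : α₁ ^ (p ^ r) = (l₁ : ℂ)) (hα₂ : α₂ ^ (p ^ r) = (l₂ : ℂ)) :
    IntermediateField.adjoin ℚ ({ζ} : Set ℂ) ⊓
        IntermediateField.adjoin ℚ ({ζ ^ p, α₁, α₂} : Set ℂ)
      = IntermediateField.adjoin ℚ ({ζ ^ p} : Set ℂ) := by
  have hp0 : 0 < p := hp.pos
  have hpr : ∀ k, 0 < p ^ k := fun k => pow_pos hp0 k
  have hω : IsPrimitiveRoot (ζ ^ p) (p ^ r) := hζ.pow (hpr _) (by rw [pow_succ, mul_comm])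
  have hrkM := aux_rank _ (hpr _) ζ hζ
  have hrkK := aux_rank _ (hpr _) (ζ ^ p) hω
  have htot : (p ^ (r + 1)).totient = p * (p ^ r).totient := by
    rw [Nat.totient_prime_pow_succ hp, Nat.totient_prime_pow hp (by omega),
      ← mul_assoc, ← pow_succ', Nat.sub_add_cancel hr]
  have hφ : 0 < (p ^ r).totient := Nat.totient_pos.2 (hpr r)
  have hKM : IntermediateField.adjoin ℚ ({ζ ^ p} : Set ℂ) ≤
      IntermediateField.adjoin ℚ ({ζ} : Set ℂ) := by
    rw [IntermediateField.adjoin_simple_le_iff]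
    exact pow_mem (IntermediateField.mem_adjoin_simple_self ℚ ζ) _
  have hKL : IntermediateField.adjoin ℚ ({ζ ^ p} : Set ℂ) ≤
      IntermediateField.adjoin ℚ ({ζ ^ p, α₁, α₂} : Set ℂ) := by
    apply IntermediateField.adjoin.mono
    simp
  have hζK : ζ ∉ IntermediateField.adjoin ℚ ({ζ ^ p} : Set ℂ) := by
    intro h
    have h1 := le_antisymm hKM ((IntermediateField.adjoin_simple_le_iff).2 h)
    rw [h1, hrkM, htot] at hrkK
    have := hp.two_le
    nlinarith
  have hfd : FiniteDimensional ℚ (IntermediateField.adjoin ℚ ({ζ} : Set ℂ)) := 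
    FiniteDimensional.of_finrank_pos (by rw [hrkM, htot]; positivity)
  have hζL : ζ ∉ IntermediateField.adjoin ℚ ({ζ ^ p, α₁, α₂} : Set ℂ) := by
    intro hζL
    have hbase : IntermediateField.adjoin ℚ ({ζ ^ p, α₁, α₂} : Set ℂ) =
        (IntermediateField.adjoin (IntermediateField.adjoin ℚ ({ζ ^ p} : Set ℂ))
          ({α₁, α₂} : Set ℂ)).restrictScalars ℚ := by
      exact (IntermediateField.adjoin_adjoin_left ℚ ({ζ ^ p} : Set ℂ) ({α₁, α₂} : Set ℂ)).symm
    rw [hbase, IntermediateField.mem_restrictScalars] at hζL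
    obtain ⟨m, hm, c, hc⟩ := aux_kummer (p ^ r) (hpr r)
      (⟨ζ ^ p, IntermediateField.mem_adjoin_simple_self ℚ _⟩ :
        IntermediateField.adjoin ℚ ({ζ ^ p} : Set ℂ))
      (IsPrimitiveRoot.coe_submonoidClass_iff.mp hω) ({α₁, α₂} : Set ℂ) (by
        rintro s (rfl | rfl)
        · exact ⟨l₁, by simp [hα₁]⟩
        · exact ⟨l₂, by simp [hα₂]⟩) ζ (hζ.ne_zero (hpr _).ne') hζL
        ⟨⟨(ζ ^ p) ^ (p ^ (r - 1)),
          pow_mem (IntermediateField.mem_adjoin_simple_self ℚ _) _⟩, by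
          change _ = (ζ ^ p) ^ (p ^ (r - 1))
          rw [← pow_mul, ← pow_succ', Nat.sub_add_cancel hr]⟩
    obtain ⟨i, j, rfl⟩ := (Submonoid.mem_closure_pair _ _ _).1 hm
    have hc' : ζ = (c : ℂ) * (α₁ ^ i * α₂ ^ j) := hc
    have hζ0 : ζ ≠ 0 := hζ.ne_zero (hpr _).ne'
    have hc0 : (c : ℂ) ≠ 0 := by
      intro h
      rw [h, zero_mul] at hc'
      exact hζ0 hc'
    have hβM : α₁ ^ i * α₂ ^ j ∈ IntermediateField.adjoin ℚ ({ζ} : Set ℂ) := by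
      have : α₁ ^ i * α₂ ^ j = (c : ℂ)⁻¹ * ζ := by
        rw [eq_inv_mul_iff_mul_eq₀ hc0, ← hc']
      rw [this]
      exact mul_mem (inv_mem (hKM c.2)) (IntermediateField.mem_adjoin_simple_self ℚ ζ)
    have hdiv : ∀ s, s ≤ r → p ^ s ∣ i ∧ p ^ s ∣ j := by
      intro s
      induction s with
      | zero => intro _; simp
      | succ s ih =>
        intro hs
        obtain ⟨⟨a, ha⟩, ⟨b, hb⟩⟩ := ih (by omega)
        have hpp : p ^ s * p ^ (r - 1 - s) * p = p ^ r := by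
          rw [← pow_add, ← pow_succ]; congr 1; omega
        obtain ⟨t, ht⟩ := aux_real p hodd _ (hpr _) ζ hζ (dvd_pow_self p (by omega))
          ((α₁ ^ i * α₂ ^ j) ^ (p ^ (r - 1 - s))) (pow_mem hβM _)
          ((l₁ : ℚ) ^ a * (l₂ : ℚ) ^ b) (by
            push_cast
            rw [← hα₁, ← hα₂, ha, hb, ← hpp]
            ring)
        have := hind a b ⟨t, by rw [ht]; simp⟩
        obtain ⟨h1, h2⟩ := this
        rw [ha, hb, pow_succ]
        exact ⟨mul_dvd_mul_left _ (by exact_mod_cast h1), mul_dvd_mul_left _ (by exact_mod_cast h2)⟩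
    obtain ⟨⟨a, ha⟩, ⟨b, hb⟩⟩ := hdiv r le_rfl
    apply hζK
    rw [ha, hb, pow_mul, pow_mul, hα₁, hα₂] at hc'
    have key : (c : ℂ) * ((l₁ : ℂ) ^ a * (l₂ : ℂ) ^ b) ∈
        IntermediateField.adjoin ℚ ({ζ ^ p} : Set ℂ) := mul_mem c.2 (mul_mem (pow_mem (intCast_mem _ _) _) (pow_mem (intCast_mem _ _) _))
    rwa [← hc'] at key
  refine le_antisymm ?_ (le_inf hKM hKL)
  set F := IntermediateField.adjoin ℚ ({ζ} : Set ℂ) ⊓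
        IntermediateField.adjoin ℚ ({ζ ^ p, α₁, α₂} : Set ℂ) with hF
  have hFM : F ≤ IntermediateField.adjoin ℚ ({ζ} : Set ℂ) := inf_le_left
  have hKF : IntermediateField.adjoin ℚ ({ζ ^ p} : Set ℂ) ≤ F := le_inf hKM hKL
  have hfF : FiniteDimensional ℚ F :=
    Module.Finite.of_injective (IntermediateField.inclusion hFM).toLinearMap
      (IntermediateField.inclusion_injective hFM)
  have hd1 := IntermediateField.finrank_dvd_of_le_right hKF
  have hd2 := IntermediateField.finrank_dvd_of_le_right hFM
  rw [hrkK] at hd1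
  rw [hrkM, htot] at hd2
  obtain ⟨k, hk⟩ := hd1
  rw [hk, mul_comm p] at hd2
  rcases (Nat.dvd_prime hp).1 (Nat.dvd_of_mul_dvd_mul_left hφ hd2) with rfl | rfl
  · exact (IntermediateField.eq_of_le_of_finrank_eq hKF (by rw [hrkK, hk, mul_one])).ge
  · exfalso
    have := IntermediateField.eq_of_le_of_finrank_eq hFM (by rw [hrkM, hk, htot, mul_comm])
    apply hζL
    have h : ζ ∈ F := by rw [this]; exact IntermediateField.mem_adjoin_simple_self ℚ ζ
    exact h.2
end

section
/- Let G be the binary recurrence sequence with parameters A = 1, B = 1 and initial values G_0 = 2, G_1 = 9 (so G_{n+2} = G_{n+1} + G_n). Then for every prime q ∈ {3, 5, 7, 11, 13, 17}, the sequence contains no q-th powers: there are no n ≥ 0 and x ∈ ℤ with G_n = x^q. -/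
def st (m : ℕ) : ℕ → ℕ × ℕ
  | 0 => (2 % m, 9 % m)
  | n + 1 => ((st m n).2, ((st m n).1 + (st m n).2) % m)

def ispow (m q v : ℕ) : Bool := (List.range m).any fun y => y ^ q % m == v

def sieve (L : List ℕ) (q B : ℕ) : Bool :=
  (List.range B).all fun r => L.any fun m => !(ispow m q (st m r).1)

theorem st_cong (G : ℕ → ℤ) (hG0 : G 0 = 2) (hG1 : G 1 = 9)
    (hGrec : ∀ n : ℕ, G (n + 2) = G (n + 1) + G n) (m n : ℕ) :
    G n ≡ ((st m n).1 : ℤ) [ZMOD m] ∧ G (n + 1) ≡ ((st m n).2 : ℤ) [ZMOD m] := by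
  induction n with
  | zero => simp [st, hG0, hG1, Int.ModEq]
  | succ n ih =>
    refine ⟨ih.2, ?_⟩
    rw [hGrec n]
    simp only [st]
    push_cast
    refine Int.ModEq.trans ?_ (Int.mod_modEq _ _).symm
    rw [add_comm]
    exact ih.1.add ih.2

theorem st_period (m B : ℕ) (h : st m B = st m 0) (n : ℕ) : st m (n + B) = st m n := by
  induction n with
  | zero => simpa using h
  | succ n ih => rw [show n + 1 + B = (n + B) + 1 by ring]; simp only [st, ih]

theorem st_mod (m B : ℕ) (h : st m B = st m 0) (n : ℕ) : st m (n % B) = st m n := by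
  have hp : Function.Periodic (st m) B := fun n => st_period m B h n
  exact hp.map_mod_nat n

theorem st_lt (m : ℕ) (hm : 0 < m) (n : ℕ) : (st m n).1 < m ∧ (st m n).2 < m := by
  induction n with
  | zero => exact ⟨Nat.mod_lt _ hm, Nat.mod_lt _ hm⟩
  | succ n ih => exact ⟨ih.2, Nat.mod_lt _ hm⟩

theorem sieve_sound (G : ℕ → ℤ) (hG0 : G 0 = 2) (hG1 : G 1 = 9)
    (hGrec : ∀ n : ℕ, G (n + 2) = G (n + 1) + G n) (L : List ℕ) (q B : ℕ) (hB : 0 < B)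
    (hL : ∀ m ∈ L, 0 < m ∧ st m B = st m 0) (hs : sieve L q B = true) :
    ¬ ∃ (n : ℕ) (x : ℤ), G n = x ^ q := by
  rintro ⟨n, x, hx⟩
  have h1 := (List.all_eq_true.mp hs) (n % B) (List.mem_range.mpr (Nat.mod_lt _ hB))
  obtain ⟨m, hm, hbad⟩ := List.any_eq_true.mp h1
  obtain ⟨hm0, hper⟩ := hL m hm
  rw [st_mod m B hper] at hbad
  have hgood : ispow m q (st m n).1 = true := by
    refine List.any_eq_true.mpr ⟨(x % m).toNat, ?_, ?_⟩
    · have := Int.emod_lt_of_pos x (b := m) (by exact_mod_cast hm0)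
      rw [List.mem_range]; omega
    · have hnn : 0 ≤ x % m := Int.emod_nonneg _ (by omega)
      have hc := (st_cong G hG0 hG1 hGrec m n).1
      rw [hx] at hc
      have h2 : (x % m) ^ q ≡ ((st m n).1 : ℤ) [ZMOD m] :=
        ((Int.mod_modEq x m).pow q).trans hc
      rw [← Int.toNat_of_nonneg hnn] at h2
      have h3 : (x % m).toNat ^ q ≡ (st m n).1 [MOD m] := by
        rw [← Int.natCast_modEq_iff]; push_cast; exact_mod_cast h2
      rw [beq_iff_eq, h3, Nat.mod_eq_of_lt (st_lt m hm0 n).1]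
  simp [hgood] at hbad

/-- The binary recurrence sequence with `G 0 = 2`, `G 1 = 9` and
`G (n+2) = G (n + 1) + G n` contains no `q`-th powers for any prime
`q ∈ {3, 5, 7, 11, 13, 17}`. -/
theorem no_powers_A1_B1_u2_v9
    (G : ℕ → ℤ) (hG0 : G 0 = 2) (hG1 : G 1 = 9)
    (hGrec : ∀ n : ℕ, G (n + 2) = G (n + 1) + G n) :
    ∀ q ∈ ({3, 5, 7, 11, 13, 17} : Finset ℕ), Nat.Prime q →
      ¬ ∃ (n : ℕ) (x : ℤ), G n = x ^ q := by
  intro q hq _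
  simp only [Finset.mem_insert, Finset.mem_singleton] at hq
  rcases hq with rfl | rfl | rfl | rfl | rfl | rfl
  · exact sieve_sound G hG0 hG1 hGrec [4, 7, 8, 9] 3 48 (by norm_num)
      (by decide +kernel) (by decide +kernel)
  · exact sieve_sound G hG0 hG1 hGrec [4, 11, 31] 5 30 (by norm_num)
      (by decide +kernel) (by decide +kernel)
  · exact sieve_sound G hG0 hG1 hGrec [29, 71, 911] 7 70 (by norm_num)
      (by decide +kernel) (by decide +kernel)
  · exact sieve_sound G hG0 hG1 hGrec [199] 11 22 (by norm_num)
      (by decide +kernel) (by decide +kernel)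
  · exact sieve_sound G hG0 hG1 hGrec [4, 79, 521] 13 78 (by norm_num)
      (by decide +kernel) (by decide +kernel)
  · exact sieve_sound G hG0 hG1 hGrec [4, 919, 3469] 17 102 (by norm_num)
      (by decide +kernel) (by decide +kernel)
end

section
/- Let G be the binary recurrence sequence with parameters A = 1, B = 1 and initial values G_0 = 7, G_1 = 3 (so G_{n+2} = G_{n+1} + G_n). Then for every prime q ∈ {3, 5, 7, 11, 13, 17}, the sequence contains no q-th powers: there are no n ≥ 0 and x ∈ ℤ with G_n = x^q. -/
def pwGood (e p a : ℕ) : Bool := a % p != 0 && (a % p) ^ e % p != 1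

def pwLoop (q : ℕ) (ps : List ℕ) : ℕ → ℕ → ℕ → Bool
  | 0, a, b => ps.all fun p => a % p == 7 % p && b % p == 3 % p
  | n + 1, a, b => ps.any (fun p => pwGood ((p - 1) / q) p a) && pwLoop q ps n b (a + b)

def gSeq : ℕ → ℕ × ℕ
  | 0 => (7, 3)
  | n + 1 => ((gSeq n).2, (gSeq n).1 + (gSeq n).2)

theorem pwLoop_spec (q : ℕ) (ps : List ℕ) (f : ℕ) : ∀ m : ℕ,
    pwLoop q ps f (gSeq m).1 (gSeq m).2 = true →
    (∀ s < f, ∃ p ∈ ps, pwGood ((p - 1) / q) p (gSeq (m + s)).1 = true) ∧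
    (∀ p ∈ ps, (gSeq (m + f)).1 % p = 7 % p ∧ (gSeq (m + f)).2 % p = 3 % p) := by
  induction f with
  | zero =>
    intro m h
    simpa [pwLoop] using h
  | succ f ih =>
    intro m h
    simp only [pwLoop, Bool.and_eq_true, List.any_eq_true] at h
    obtain ⟨h1, h2⟩ := h
    obtain ⟨i1, i2⟩ := ih (m + 1) h2
    have e : ∀ s, m + 1 + s = m + (s + 1) := by intro s; omega
    constructor
    · intro s hs
      rcases s with _ | s
      · exact h1
      · rw [← e]; exact i1 s (by omega)
    · rw [← e]; exact i2

theorem gSeq_period (p M : ℕ) (h : (gSeq M).1 % p = 7 % p ∧ (gSeq M).2 % p = 3 % p) (n : ℕ) :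
    (gSeq (n + M)).1 % p = (gSeq n).1 % p ∧ (gSeq (n + M)).2 % p = (gSeq n).2 % p := by
  induction n with
  | zero => simpa [gSeq] using h
  | succ n ih =>
    rw [show n + 1 + M = (n + M) + 1 by omega]
    exact ⟨ih.2, Nat.ModEq.add ih.1 ih.2⟩

theorem gSeq_mod (p M : ℕ) (h : (gSeq M).1 % p = 7 % p ∧ (gSeq M).2 % p = 3 % p) (r k : ℕ) :
    (gSeq (r + M * k)).1 % p = (gSeq r).1 % p := by
  induction k with
  | zero => simp
  | succ k ih =>
    rw [show r + M * (k + 1) = (r + M * k) + M by ring, (gSeq_period p M h _).1, ih]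

theorem pw_none (q M : ℕ) (ps : List ℕ) (hM : 0 < M)
    (hps : ∀ p ∈ ps, p.Prime ∧ q * ((p - 1) / q) = p - 1)
    (hl : pwLoop q ps M 7 3 = true) (n : ℕ) (x : ℤ) (hx : ((gSeq n).1 : ℤ) = x ^ q) : False := by
  obtain ⟨h1, h2⟩ := pwLoop_spec q ps M 0 hl
  simp only [zero_add] at h1 h2
  obtain ⟨p, hp, hg⟩ := h1 (n % M) (Nat.mod_lt _ hM)
  obtain ⟨pp, hd⟩ := hps p hp
  have hm := gSeq_mod p M (h2 p hp) (n % M) (n / M)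
  rw [Nat.mod_add_div] at hm
  haveI : Fact p.Prime := ⟨pp⟩
  simp only [pwGood, Bool.and_eq_true, bne_iff_ne, ne_eq] at hg
  obtain ⟨g1, g2⟩ := hg
  rw [← hm] at g1 g2
  have hz : (((gSeq n).1 : ℕ) : ZMod p) = (x : ZMod p) ^ q := by
    have := congrArg (Int.cast : ℤ → ZMod p) hx
    simpa using this
  have hne : (((gSeq n).1 : ℕ) : ZMod p) ≠ 0 := by
    intro h
    exact g1 (Nat.mod_eq_zero_of_dvd ((ZMod.natCast_eq_zero_iff _ _).1 h))
  have h1p := pp.one_lt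
  have hx0 : (x : ZMod p) ≠ 0 := by
    intro h
    rcases Nat.eq_zero_or_pos q with h0 | h0
    · subst h0; simp at hd; omega
    · rw [h, zero_pow h0.ne'] at hz; exact hne hz
  apply g2
  have : (((gSeq n).1 ^ ((p - 1) / q) : ℕ) : ZMod p) = ((1 : ℕ) : ZMod p) := by
    push_cast
    rw [hz, ← pow_mul, hd, ZMod.pow_card_sub_one_eq_one hx0]
  rw [ZMod.natCast_eq_natCast_iff'] at this
  rw [← Nat.pow_mod, this, Nat.mod_eq_of_lt h1p]

/-- The binary recurrence sequence with `G 0 = 7`, `G 1 = 3` and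
`G (n+2) = G (n + 1) + G n` contains no `q`-th powers for any prime
`q ∈ {3, 5, 7, 11, 13, 17}`. -/
theorem no_powers_A1_B1_u7_v3
    (G : ℕ → ℤ) (hG0 : G 0 = 7) (hG1 : G 1 = 3)
    (hGrec : ∀ n : ℕ, G (n + 2) = G (n + 1) + G n) :
    ∀ q ∈ ({3, 5, 7, 11, 13, 17} : Finset ℕ), Nat.Prime q →
      ¬ ∃ (n : ℕ) (x : ℤ), G n = x ^ q := by
  have hG : ∀ n, G n = ((gSeq n).1 : ℤ) ∧ G (n + 1) = ((gSeq n).2 : ℤ) := by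
    intro n
    induction n with
    | zero => simp [gSeq, hG0, hG1]
    | succ n ih =>
      refine ⟨ih.2, ?_⟩
      rw [hGrec, ih.1, ih.2]
      simp only [gSeq]
      push_cast
      ring
  rintro q hq - ⟨n, x, hx⟩
  rw [(hG n).1] at hx
  simp only [Finset.mem_insert, Finset.mem_singleton] at hq
  rcases hq with rfl | rfl | rfl | rfl | rfl | rfl
  · exact pw_none 3 108 [19, 109] (by norm_num) (by norm_num) (by decide +kernel) n x hx
  · exact pw_none 5 40 [11, 41] (by norm_num) (by norm_num) (by decide +kernel) n x hx
  · exact pw_none 7 56 [29, 281] (by norm_num) (by norm_num) (by decide +kernel) n x hx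
  · exact pw_none 11 44 [89] (by norm_num) (by norm_num) (by decide +kernel) n x hx
  · exact pw_none 13 78 [79, 521] (by norm_num) (by norm_num) (by decide +kernel) n x hx
  · exact pw_none 17 102 [919, 3469] (by norm_num) (by norm_num) (by decide +kernel) n x hx
end

section
/- Let G be the binary recurrence sequence with parameters A = 1, B = 2 and initial values G_0 = 2, G_1 = 5 (so G_{n+2} = G_{n+1} + 2·G_n). Then for every prime q ∈ {3, 5, 7, 11, 13, 17}, the sequence contains no q-th powers: there are no n ≥ 0 and x ∈ ℤ with G_n = x^q. -/
def gres (p r : ℕ) : ℕ := (7 * 2 ^ r + (if r % 2 = 0 then p - 1 else 1)) % p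

def okres (p k r : ℕ) : Bool := (gres p r) ^ (k + 1) % p == 3 ^ k * gres p r % p

theorem okres_of_pow (p q k M n : ℕ) (hp : p.Prime) (hpq : p = q * k + 1) (hq : q ≠ 0)
    (hM : 2 ^ M % p = 1) (hM2 : M % 2 = 0) (y x : ℤ) (hy : 3 * y = 7 * 2 ^ n - (-1) ^ n)
    (hx : y = x ^ q) : okres p k (n % M) = true := by
  haveI : Fact p.Prime := ⟨hp⟩
  have h2 : (2 : ZMod p) ^ M = 1 := by
    have h : ((2 ^ M : ℕ) : ZMod p) = ((1 : ℕ) : ZMod p) := by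
      rw [ZMod.natCast_eq_natCast_iff']
      rw [hM, Nat.mod_eq_of_lt hp.one_lt]
    simpa using h
  have hr : (2 : ZMod p) ^ n = 2 ^ (n % M) := by
    conv_lhs => rw [← Nat.div_add_mod n M, pow_add, pow_mul, h2, one_pow, one_mul]
  have hpar : n % M % 2 = n % 2 :=
    Nat.mod_mod_of_dvd n (Nat.dvd_of_mod_eq_zero hM2)
  have hyp : (3 : ZMod p) * (y : ZMod p) = 7 * 2 ^ n - (-1) ^ n := by
    have := congrArg (Int.cast : ℤ → ZMod p) hy
    push_cast at this
    exact this
  have hg : ((gres p (n % M) : ℕ) : ZMod p) = 3 * (y : ZMod p) := by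
    rw [hyp, hr, gres, ZMod.natCast_mod]
    rw [hpar]
    split_ifs with h
    · have he : Even n := Nat.even_iff.mpr h
      rw [he.neg_one_pow]
      push_cast [Nat.cast_sub hp.one_le]
      simp
      ring
    · have he : Odd n := Nat.odd_iff.mpr (by omega)
      rw [he.neg_one_pow]
      push_cast
      ring
  have hyk : (y : ZMod p) ^ (k + 1) = y := by
    rw [hx]
    push_cast
    by_cases h0 : (x : ZMod p) = 0
    · rw [h0, zero_pow hq, zero_pow (by omega)]
    · have := ZMod.pow_card_sub_one_eq_one h0
      have e : p - 1 = q * k := by omega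
      rw [e] at this
      rw [← pow_mul, mul_add, pow_add, this, mul_one, one_mul]
  have hfin : ((gres p (n % M) ^ (k + 1) : ℕ) : ZMod p) =
      ((3 ^ k * gres p (n % M) : ℕ) : ZMod p) := by
    push_cast
    rw [hg, mul_pow, hyk]
    ring
  rw [ZMod.natCast_eq_natCast_iff'] at hfin
  simp [okres, hfin]

/-- The binary recurrence sequence with `G 0 = 2`, `G 1 = 5` and
`G (n+2) = G (n + 1) + 2 * G n` contains no `q`-th powers for any prime
`q ∈ {3, 5, 7, 11, 13, 17}`. -/
theorem no_powers_A1_B2_u2_v5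
    (G : ℕ → ℤ) (hG0 : G 0 = 2) (hG1 : G 1 = 5)
    (hGrec : ∀ n : ℕ, G (n + 2) = G (n + 1) + 2 * G n) :
    ∀ q ∈ ({3, 5, 7, 11, 13, 17} : Finset ℕ), Nat.Prime q →
      ¬ ∃ (n : ℕ) (x : ℤ), G n = x ^ q := by
  have hcl : ∀ n, 3 * G n = 7 * 2 ^ n - (-1) ^ n ∧
      3 * G (n + 1) = 7 * 2 ^ (n + 1) - (-1) ^ (n + 1) := by
    intro n
    induction n with
    | zero => simp [hG0, hG1]
    | succ m ih =>
      refine ⟨ih.2, ?_⟩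
      rw [hGrec, mul_add, ih.2, mul_left_comm, ih.1]
      ring
  rintro q hq - ⟨n, x, hx⟩
  have hy := (hcl n).1
  simp only [Finset.mem_insert, Finset.mem_singleton] at hq
  rcases hq with rfl | rfl | rfl | rfl | rfl | rfl
  · have h1 := okres_of_pow 7 3 2 6 n (by norm_num) (by norm_num) (by norm_num) (by norm_num)
      (by norm_num) _ x hy hx
    have hd : ∀ r < 6, okres 7 2 r = false := by decide +kernel
    simp [hd _ (Nat.mod_lt n (by norm_num))] at h1
  · have h1 := okres_of_pow 11 5 2 10 n (by norm_num) (by norm_num) (by norm_num) (by norm_num)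
      (by norm_num) _ x hy hx
    have hd : ∀ r < 10, okres 11 2 r = false := by decide +kernel
    simp [hd _ (Nat.mod_lt n (by norm_num))] at h1
  · have h1 := okres_of_pow 43 7 6 42 n (by norm_num) (by norm_num) (by norm_num) (by norm_num)
      (by norm_num) _ x hy hx
    have h2 := okres_of_pow 127 7 18 42 n (by norm_num) (by norm_num) (by norm_num) (by norm_num)
      (by norm_num) _ x hy hx
    have h3 := okres_of_pow 337 7 48 42 n (by norm_num) (by norm_num) (by norm_num) (by norm_num)
      (by norm_num) _ x hy hx
    have hd : ∀ r < 42, (okres 43 6 r && okres 127 18 r && okres 337 48 r) = false := by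
      decide +kernel
    have := hd _ (Nat.mod_lt n (by norm_num))
    simp [h1, h2, h3] at this
  · have h1 := okres_of_pow 23 11 2 22 n (by norm_num) (by norm_num) (by norm_num) (by norm_num)
      (by norm_num) _ x hy hx
    have h2 := okres_of_pow 89 11 8 22 n (by norm_num) (by norm_num) (by norm_num) (by norm_num)
      (by norm_num) _ x hy hx
    have hd : ∀ r < 22, (okres 23 2 r && okres 89 8 r) = false := by decide +kernel
    have := hd _ (Nat.mod_lt n (by norm_num))
    simp [h1, h2] at this
  · have h1 := okres_of_pow 2731 13 210 26 n (by norm_num) (by norm_num) (by norm_num)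
      (by norm_num) (by norm_num) _ x hy hx
    have hd : ∀ r < 26, okres 2731 210 r = false := by decide +kernel
    simp [hd _ (Nat.mod_lt n (by norm_num))] at h1
  · have h1 := okres_of_pow 43691 17 2570 34 n (by norm_num) (by norm_num) (by norm_num)
      (by norm_num) (by norm_num) _ x hy hx
    have h2 := okres_of_pow 131071 17 7710 34 n (by norm_num) (by norm_num) (by norm_num)
      (by norm_num) (by norm_num) _ x hy hx
    have hd : ∀ r < 34, (okres 43691 2570 r && okres 131071 7710 r) = false := by
      decide +kernel
    have := hd _ (Nat.mod_lt n (by norm_num))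
    simp [h1, h2] at this
end

section
/- Let G be the binary recurrence sequence with parameters A = 2, B = 1 and initial values G_0 = 2, G_1 = 2 (so G_{n+2} = 2·G_{n+1} + G_n). Then for every prime q ∈ {3, 5, 7, 11, 13, 17}, the sequence contains no q-th powers: there are no n ≥ 0 and x ∈ ℤ with G_n = x^q. -/
/-- The binary recurrence sequence with `G 0 = 2`, `G 1 = 2` and
`G (n+2) = 2 * G (n + 1) + G n` contains no `q`-th powers for any prime
`q ∈ {3, 5, 7, 11, 13, 17}`. -/
theorem no_powers_A2_B1_u2_v2
    (G : ℕ → ℤ) (hG0 : G 0 = 2) (hG1 : G 1 = 2)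
    (hGrec : ∀ n : ℕ, G (n + 2) = 2 * G (n + 1) + G n) :
    ∀ q ∈ ({3, 5, 7, 11, 13, 17} : Finset ℕ), Nat.Prime q →
      ¬ ∃ (n : ℕ) (x : ℤ), G n = x ^ q := by
  intro q _ hq
  rintro ⟨n, x, h⟩
  have key : ∀ n, G n % 4 = 2 ∧ G (n + 1) % 4 = 2 := by
    intro n
    induction n with
    | zero => simp [hG0, hG1]
    | succ k ih =>
      have := hGrec k
      refine ⟨ih.2, ?_⟩
      have e : G (k + 1 + 1) = 2 * G (k + 1) + G k := this
      omega
  have hn := (key n).1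
  have h2 : (2 : ℤ) ∣ x := by
    apply Int.prime_two.dvd_of_dvd_pow (n := q)
    rw [← h]
    omega
  have h4 : (4 : ℤ) ∣ x ^ q := by
    have h5 : (2 : ℤ) ^ 2 ∣ x ^ q := (pow_dvd_pow_of_dvd h2 2).trans (pow_dvd_pow x hq.two_le)
    norm_num at h5
    exact h5
  rw [← h] at h4
  omega
end

section
/- Let G be the binary recurrence sequence with parameters A = 3, B = 1 and initial values G_0 = 2, G_1 = 3 (so G_{n+2} = 3·G_{n+1} + G_n). Then for every prime q ∈ {3, 5, 7, 11, 13, 17}, the sequence contains no q-th powers: there are no n ≥ 0 and x ∈ ℤ with G_n = x^q. -/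
def gStep (p : ℕ) (s : ℕ × ℕ) : ℕ × ℕ := (s.2, (3 * s.2 + s.1) % p)

def gSt (p : ℕ) : ℕ → ℕ × ℕ
  | 0 => (2, 3)
  | k + 1 => gStep p (gSt p k)

def gChk (p e k : ℕ) : Bool := Nat.ble ((gSt p k).1 ^ e % p) 1

theorem gSt_add (p d : ℕ) (hd : gSt p d = (2, 3)) (k : ℕ) : gSt p (k + d) = gSt p k := by
  induction k with
  | zero => simpa [gSt] using hd
  | succ k ih => rw [show k + 1 + d = (k + d) + 1 by ring, gSt, gSt, ih]

theorem gSt_mod (p d : ℕ) (hd : gSt p d = (2, 3)) (n : ℕ) : gSt p n = gSt p (n % d) := by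
  have h : ∀ m k, gSt p (k + d * m) = gSt p k := by
    intro m
    induction m with
    | zero => intro k; rfl
    | succ m ih => intro k; rw [show k + d * (m + 1) = (k + d * m) + d by ring, gSt_add p d hd, ih]
  conv_lhs => rw [← Nat.mod_add_div n d]
  exact h _ _

theorem gSt_cast (G : ℕ → ℤ) (hG0 : G 0 = 2) (hG1 : G 1 = 3)
    (hGrec : ∀ n : ℕ, G (n + 2) = 3 * G (n + 1) + G n) (p n : ℕ) :
    ((gSt p n).1 : ZMod p) = (G n : ZMod p) ∧ ((gSt p n).2 : ZMod p) = (G (n + 1) : ZMod p) := by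
  induction n with
  | zero => simp [gSt, hG0, hG1]
  | succ n ih =>
    refine ⟨ih.2, ?_⟩
    simp [gSt, gStep, hGrec, ih.1, ih.2]

theorem gKey (G : ℕ → ℤ) (hG0 : G 0 = 2) (hG1 : G 1 = 3)
    (hGrec : ∀ n : ℕ, G (n + 2) = 3 * G (n + 1) + G n) {q n : ℕ} {x : ℤ} (h : G n = x ^ q)
    (p e d : ℕ) (hp : p.Prime) (he : q * e = p - 1) (hd : gSt p d = (2, 3)) :
    gChk p e (n % d) = true := by
  have := Fact.mk hp
  have h2 := hp.two_le
  have he0 : q * e ≠ 0 := by omega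
  unfold gChk
  rw [← gSt_mod p d hd]
  apply Nat.ble_eq_true_of_le
  have hc := (gSt_cast G hG0 hG1 hGrec p n).1
  rw [h] at hc
  push_cast at hc
  have hpow : (((gSt p n).1 ^ e : ℕ) : ZMod p) = (x : ZMod p) ^ (p - 1) := by
    push_cast
    rw [hc, ← pow_mul, he]
  by_cases hx : (x : ZMod p) = 0
  · rw [hx, zero_pow (by omega)] at hpow
    have : (gSt p n).1 ^ e ≡ 0 [MOD p] := (ZMod.natCast_eq_natCast_iff _ _ _).1 (by simpa using hpow)
    rw [this]; simp
  · rw [ZMod.pow_card_sub_one_eq_one hx] at hpow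
    have : (gSt p n).1 ^ e ≡ 1 [MOD p] := (ZMod.natCast_eq_natCast_iff _ _ _).1 (by simpa using hpow)
    rw [this]; exact Nat.mod_le _ _

theorem gFin2 (N d₁ d₂ : ℕ) (c₁ c₂ : ℕ → Bool) (h₁ : d₁ ∣ N) (h₂ : d₂ ∣ N) (hN : 0 < N)
    (hall : ∀ r < N, (c₁ (r % d₁) && c₂ (r % d₂)) = false) (n : ℕ)
    (k₁ : c₁ (n % d₁) = true) (k₂ : c₂ (n % d₂) = true) : False := by
  have := hall (n % N) (Nat.mod_lt _ hN)
  rw [Nat.mod_mod_of_dvd _ h₁, Nat.mod_mod_of_dvd _ h₂, k₁, k₂] at this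
  simp at this

/-- The binary recurrence sequence with `G 0 = 2`, `G 1 = 3` and
`G (n+2) = 3 * G (n + 1) + G n` contains no `q`-th powers for any prime
`q ∈ {3, 5, 7, 11, 13, 17}`. -/
theorem no_powers_A3_B1_u2_v3
    (G : ℕ → ℤ) (hG0 : G 0 = 2) (hG1 : G 1 = 3)
    (hGrec : ∀ n : ℕ, G (n + 2) = 3 * G (n + 1) + G n) :
    ∀ q ∈ ({3, 5, 7, 11, 13, 17} : Finset ℕ), Nat.Prime q →
      ¬ ∃ (n : ℕ) (x : ℤ), G n = x ^ q := by
  intro q hq _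
  simp only [Finset.mem_insert, Finset.mem_singleton] at hq
  rintro ⟨n, x, h⟩
  rcases hq with rfl | rfl | rfl | rfl | rfl | rfl
  · exact gFin2 96 16 96 (gChk 7 2) (gChk 673 224) (by norm_num) (by norm_num)
      (by norm_num) (by decide +kernel) n
      (gKey G hG0 hG1 hGrec h 7 2 16 (by norm_num) (by norm_num) (by decide +kernel))
      (gKey G hG0 hG1 hGrec h 673 224 96 (by norm_num) (by norm_num) (by decide +kernel))
  · exact gFin2 40 8 10 (gChk 11 2) (gChk 131 26) (by norm_num) (by norm_num)
      (by norm_num) (by decide +kernel) n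
      (gKey G hG0 hG1 hGrec h 11 2 8 (by norm_num) (by norm_num) (by decide +kernel))
      (gKey G hG0 hG1 hGrec h 131 26 10 (by norm_num) (by norm_num) (by decide +kernel))
  · exact gFin2 28 14 28 (gChk 1429 204) (gChk 29 4) (by norm_num) (by norm_num)
      (by norm_num) (by decide +kernel) n
      (gKey G hG0 hG1 hGrec h 1429 204 14 (by norm_num) (by norm_num) (by decide +kernel))
      (gKey G hG0 hG1 hGrec h 29 4 28 (by norm_num) (by norm_num) (by decide +kernel))
  · exact gFin2 176 22 176 (gChk 23 2) (gChk 33617 3056) (by norm_num) (by norm_num)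
      (by norm_num) (by decide +kernel) n
      (gKey G hG0 hG1 hGrec h 23 2 22 (by norm_num) (by norm_num) (by decide +kernel))
      (gKey G hG0 hG1 hGrec h 33617 3056 176 (by norm_num) (by norm_num) (by decide +kernel))
  · exact gFin2 52 26 52 (gChk 53 4) (gChk 118717 9132) (by norm_num) (by norm_num)
      (by norm_num) (by decide +kernel) n
      (gKey G hG0 hG1 hGrec h 53 4 26 (by norm_num) (by norm_num) (by decide +kernel))
      (gKey G hG0 hG1 hGrec h 118717 9132 52 (by norm_num) (by norm_num) (by decide +kernel))
  · exact gFin2 136 34 136 (gChk 1531 90) (gChk 1361 80) (by norm_num) (by norm_num)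
      (by norm_num) (by decide +kernel) n
      (gKey G hG0 hG1 hGrec h 1531 90 34 (by norm_num) (by norm_num) (by decide +kernel))
      (gKey G hG0 hG1 hGrec h 1361 80 136 (by norm_num) (by norm_num) (by decide +kernel))
end

section
/- Let G be the binary recurrence sequence with parameters A = 1, B = 1 and initial values G_0 = 1, G_1 = 3 (so G_{n+2} = G_{n+1} + G_n; the sequence begins 1, 3, 4, 7, 11, 18, ...). Then the equation G_n = 5·x³ has no solutions: there are no n ≥ 0 and x ∈ ℤ with G_n = 5·x³. -/
/-- The binary recurrence sequence with `G 0 = 1`, `G 1 = 3` and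
`G (n+2) = G (n+1) + G n` (beginning `1, 3, 4, 7, 11, 18, ...`) contains no term of
the form `5·x³`. -/
theorem no_five_times_cube_A1_B1_u1_v3
    (G : ℕ → ℤ) (hG0 : G 0 = 1) (hG1 : G 1 = 3)
    (hGrec : ∀ n : ℕ, G (n + 2) = G (n + 1) + G n) :
    ¬ ∃ (n : ℕ) (x : ℤ), G n = 5 * x ^ 3 := by
  have key : ∀ n : ℕ, G n % 5 ≠ 0 ∧ (G (n + 1) - 3 * G n) % 5 = 0 := by
    intro n
    induction n with
    | zero => simp [hG0, hG1]
    | succ k ih =>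
      have h := hGrec k
      have e : G (k + 1 + 1) = G (k + 1) + G k := h
      rw [e]
      omega
  rintro ⟨n, x, h⟩
  have := (key n).1
  omega
end
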